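/- arXiv:2605.26482 — 2 statements merged into one kernel-verified Lean document; each statement's English description precedes it below -/
import Mathlib

section
/- There exists a positive real number r₀ such that for every real number r > r₀, the set of values {C_{r,ℚ,χ} : χ a Dirichlet character (of any modulus)} equals the set of all positive integers. -/
/-- The twisted divisor function `σ_{r,ℚ,χ}(n) = ∑_{d ∣ n} χ(d) d^{-r}` on positive integers. -/
noncomputable def sigmaQ {m : ℕ} (χ : DirichletCharacter ℂ m) (r : ℝ) (n : ℕ) : ℂ :=
  ∑ d ∈ n.divisors, χ ((d : ℕ) : ZMod m) * (((d : ℝ) ^ (-r) : ℝ) : ℂ)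

/-!
Let `T k` be the closure of the set of divisor sums `σ(n)` over the `k`-rough numbers `n`; the set
in question is `T 0`. For a prime `p`, `T p` is the closure of the union over `a` of the dilates
`σ(p ^ a) • T (p + 1)`, whose successive factors have ratio `1 + O(p ^ (-r(a + 1)))`.

*Finiteness.* By Mertens' theorem in residue classes, the primes `q > N` in a reduced class have
`∑ q ^ (-r)` of larger order than `N ^ (-r)`, so by Kakeya's theorem the subsums of the numbers
`log (1 + χ(q) q ^ (-r))` over such primes fill out everything of size `O(N ^ (-r))`: real intervals
when `χ` is real, and complex discs when `χ(b)` is not real for some `b`, where the classes of `1`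
and `b` together supply two independent directions. Hence every small ratio is attained inside
`T (N + 1)`. It follows that consecutive dilates overlap when `N` is large, which makes `T N`
connected; descending from `N` to `0`, each prime multiplies the number of connected pieces by a
finite factor, because all but finitely many of its dilates overlap.

*Every count occurs.* Let `χ` be the principal character whose modulus is the product of the primes
up to `N` other than one large prime `p₀`. Then `T 0` is the closure of the union of the intervals
`s a • [1, Z]` with `s a = 1 + x + ⋯ + x ^ a` and `x = p₀ ^ (-r)`, where `Z` is the Euler product
over the primes above `N`. The relative gaps `x ^ (a + 1) / s a` decrease, so this union has `m + 1`
components exactly when `Z - 1` separates the first `m` gaps from the rest. As `N` grows, `Z`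
decreases to `1` in steps small enough to land there.
-/

section AbelSummation

open Finset

variable {E : Type*} [NormedAddCommGroup E] [NormedSpace ℝ E] {w : ℕ → ℝ} {f : ℕ → E} {B : ℝ}

theorem norm_sum_range_smul_le (hw : Antitone w) (hw₀ : ∀ n, 0 ≤ w n)
    (hB : ∀ n, ‖∑ i ∈ range n, f i‖ ≤ B) (n : ℕ) : ‖∑ i ∈ range n, w i • f i‖ ≤ B * w 0 := by
  have hB₀ : 0 ≤ B := (norm_nonneg _).trans (hB 0)
  rcases n with _ | n
  · simpa using mul_nonneg hB₀ (hw₀ 0)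
  have hterm (i : ℕ) : ‖(w (i + 1) - w i) • ∑ j ∈ range (i + 1), f j‖ ≤ B * (w i - w (i + 1)) := by
    have hdiff : 0 ≤ w i - w (i + 1) := sub_nonneg.2 (hw i.le_succ)
    rw [norm_smul, Real.norm_eq_abs, abs_sub_comm, abs_of_nonneg hdiff, mul_comm]
    exact mul_le_mul_of_nonneg_right (hB _) hdiff
  have hlast : ‖w n • ∑ i ∈ range (n + 1), f i‖ ≤ B * w n := by
    rw [norm_smul, Real.norm_of_nonneg (hw₀ n), mul_comm]
    exact mul_le_mul_of_nonneg_right (hB _) (hw₀ n)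
  rw [sum_range_by_parts, Nat.add_sub_cancel]
  calc ‖w n • ∑ i ∈ range (n + 1), f i
        - ∑ i ∈ range n, (w (i + 1) - w i) • ∑ j ∈ range (i + 1), f j‖
      ≤ B * w n + ∑ i ∈ range n, B * (w i - w (i + 1)) :=
        (norm_sub_le _ _).trans (add_le_add hlast (norm_sum_le_of_le _ fun i _ ↦ hterm i))
    _ = B * w 0 := by rw [← mul_sum, sum_range_sub']; ring

theorem norm_sum_Ico_smul_le {a : ℕ} (hw : AntitoneOn w (Set.Ici a)) (hw₀ : ∀ n ≥ a, 0 ≤ w n)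
    (hB : ∀ n, ‖∑ i ∈ Ico a n, f i‖ ≤ B) (b : ℕ) : ‖∑ i ∈ Ico a b, w i • f i‖ ≤ B * w a := by
  rw [sum_Ico_eq_sum_range]
  refine norm_sum_range_smul_le (w := fun i ↦ w (a + i)) (f := fun i ↦ f (a + i))
    (fun i j hij ↦ hw (by simp) (by simp) (by lia)) (fun i ↦ hw₀ _ (by lia)) (fun n ↦ ?_) _
  simpa [sum_Ico_eq_sum_range] using hB (a + n)

end AbelSummation

section Mertens

open Finset Filter Asymptotics ArithmeticFunction

theorem sum_range_add_one_eq_sum_Ioc {M : Type*} [AddCommMonoid M] {f : ℕ → M} (hf : f 0 = 0)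
    (N : ℕ) : ∑ n ∈ range (N + 1), f n = ∑ n ∈ Ioc 0 N, f n := by
  rw [range_eq_Ico, sum_eq_sum_Ico_succ_bot N.succ_pos, hf, zero_add]
  rfl

theorem isBigO_one_sum_Ioc_of_summable {f : ℕ → ℝ} (hf : Summable f) :
    (fun N : ℕ ↦ ∑ n ∈ Ioc 0 N, f n) =O[atTop] fun _ ↦ (1 : ℝ) := by
  refine IsBigO.of_bound (∑' n, ‖f n‖) (.of_forall fun N ↦ ?_)
  rw [norm_one, mul_one]
  exact (norm_sum_le _ _).trans (hf.norm.sum_le_tsum _ fun n _ ↦ norm_nonneg _)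

theorem div_le_natCast_div_add_one (N d : ℕ) : (N : ℝ) / d ≤ (N / d + 1 : ℕ) := by
  have := Nat.lt_floor_add_one ((N : ℝ) / d)
  rw [Nat.floor_div_natCast, Nat.floor_natCast] at this
  exact_mod_cast this.le

theorem sum_vonMangoldt_le (N : ℕ) : ∑ n ∈ Ioc 0 N, Λ n ≤ (Real.log 4 + 4) * N := by
  simpa [Chebyshev.psi] using Chebyshev.psi_le_const_mul_self (x := N) N.cast_nonneg

theorem log_factorial_eq_sum_vonMangoldt (N : ℕ) :
    Real.log N.factorial = ∑ d ∈ Ioc 0 N, Λ d * (N / d : ℕ) := by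
  rw [← sum_Ioc_mul_zeta_eq_sum, vonMangoldt_mul_zeta, ← prod_Ico_id_eq_factorial, Nat.cast_prod,
    Real.log_prod (by simp; lia)]
  rfl

theorem log_factorial_sub_isBigO :
    (fun N : ℕ ↦ Real.log N.factorial - N * Real.log N) =O[atTop] fun N ↦ (N : ℝ) := by
  refine IsBigO.of_bound 1 ((eventually_ge_atTop 1).mono fun N hN ↦ ?_)
  have hupper : Real.log N.factorial ≤ N * Real.log N := by
    rw [← Real.log_pow]
    exact Real.log_le_log (by positivity) (by exact_mod_cast Nat.factorial_le_pow N)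
  have hlower := Stirling.le_log_factorial_stirling (n := N) (by lia)
  have h2π : 0 ≤ Real.log (2 * Real.pi) := Real.log_nonneg (by linarith [Real.pi_gt_three])
  rw [Real.norm_natCast, one_mul, Real.norm_eq_abs, abs_le]
  constructor <;> linarith [Real.log_natCast_nonneg N]

theorem mul_sum_vonMangoldt_div_sub_log_factorial_isBigO :
    (fun N : ℕ ↦ N * ∑ n ∈ Ioc 0 N, Λ n / n - Real.log N.factorial)
      =O[atTop] fun N ↦ (N : ℝ) := by
  refine IsBigO.of_bound (Real.log 4 + 4) (.of_forall fun N ↦ ?_)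
  have hdiff : N * ∑ n ∈ Ioc 0 N, Λ n / n - Real.log N.factorial
      = ∑ n ∈ Ioc 0 N, Λ n * ((N : ℝ) / n - (N / n : ℕ)) := by
    rw [log_factorial_eq_sum_vonMangoldt, mul_sum, ← sum_sub_distrib]
    exact sum_congr rfl fun n _ ↦ by ring
  rw [hdiff, Real.norm_natCast]
  refine (norm_sum_le_of_le _ fun n _ ↦ ?_).trans (sum_vonMangoldt_le N)
  have hfloor : (N / n : ℕ) ≤ (N : ℝ) / n := Nat.cast_div_le
  have hceil := div_le_natCast_div_add_one N n
  push_cast at hceil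
  rw [norm_mul, Real.norm_of_nonneg vonMangoldt_nonneg, Real.norm_of_nonneg (by linarith)]
  exact mul_le_of_le_one_right vonMangoldt_nonneg (by linarith)

theorem sum_vonMangoldt_div_sub_log_isBigO_one :
    (fun N : ℕ ↦ ∑ n ∈ Ioc 0 N, Λ n / n - Real.log N) =O[atTop] fun _ ↦ (1 : ℝ) := by
  have h := (mul_sum_vonMangoldt_div_sub_log_factorial_isBigO.add log_factorial_sub_isBigO).mul
    (isBigO_refl (fun N : ℕ ↦ (N : ℝ)⁻¹) atTop)
  refine h.congr' ?_ ?_ <;> filter_upwards [eventually_ge_atTop 1] with N hN <;> field_simp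
  ring

variable {m : ℕ}

theorem sum_dirichletCharacter_vonMangoldt_div_mul (χ : DirichletCharacter ℂ m) (N : ℕ) :
    ∑ n ∈ Ioc 0 N, χ (n : ZMod m) / n * (Real.log n : ℂ) =
      ∑ n ∈ Ioc 0 N, χ (n : ZMod m) / n * (Λ n : ℂ) *
        ∑ k ∈ Ioc 0 (N / n), χ (k : ZMod m) / k := by
  let f : ArithmeticFunction ℂ := ⟨fun n ↦ χ (n : ZMod m) / n * (Λ n : ℂ), by simp⟩
  let g : ArithmeticFunction ℂ := ⟨fun n ↦ χ (n : ZMod m) / n, by simp⟩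
  have hfg (n : ℕ) : (f * g) n = χ (n : ZMod m) / n * (Real.log n : ℂ) := by
    rw [ArithmeticFunction.mul_apply, ← vonMangoldt_sum, Complex.ofReal_sum, mul_sum,
      ← Nat.sum_divisorsAntidiagonal (fun i _ ↦ χ (n : ZMod m) / n * (Λ i : ℂ))]
    refine sum_congr rfl fun x hx ↦ ?_
    rw [← (Nat.mem_divisorsAntidiagonal.1 hx).1]
    change χ (x.1 : ZMod m) / x.1 * (Λ x.1 : ℂ) * (χ (x.2 : ZMod m) / x.2) = _
    push_cast
    rw [map_mul]
    ring
  exact (sum_congr rfl fun n _ ↦ (hfg n).symm).trans (sum_Ioc_mul_eq_sum_sum f g N)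

theorem norm_dirichletCharacter_div_mul_vonMangoldt_le (χ : DirichletCharacter ℂ m) (n : ℕ) :
    ‖χ (n : ZMod m) / n * (Λ n : ℂ)‖ ≤ Λ n / n := by
  rw [norm_mul, norm_div, Complex.norm_natCast, Complex.norm_of_nonneg vonMangoldt_nonneg,
    div_mul_eq_mul_div]
  have := mul_le_of_le_one_left (vonMangoldt_nonneg (n := n)) (χ.norm_le_one (n : ZMod m))
  gcongr

variable [NeZero m] {χ : DirichletCharacter ℂ m}

theorem sum_range_modulus_dirichletCharacter (hχ : χ ≠ 1) :
    ∑ i ∈ range m, χ (i : ZMod m) = 0 := by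
  rw [← MulChar.sum_eq_zero_of_ne_one hχ]
  refine sum_nbij' (fun i ↦ (i : ZMod m)) ZMod.val ?_ ?_ ?_ ?_ ?_ <;>
    simp +contextual [ZMod.val_lt, Nat.mod_eq_of_lt]

theorem norm_sum_range_dirichletCharacter_le (hχ : χ ≠ 1) (n : ℕ) :
    ‖∑ i ∈ range n, χ (i : ZMod m)‖ ≤ m := by
  induction n using Nat.strong_induction_on with
  | _ n ih =>
    rcases lt_or_ge n m with hnm | hmn
    · calc ‖∑ i ∈ range n, χ (i : ZMod m)‖ ≤ ∑ _i ∈ range n, (1 : ℝ) :=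
            norm_sum_le_of_le _ fun i _ ↦ χ.norm_le_one _
        _ ≤ m := by simpa using hnm.le
    · obtain ⟨k, rfl⟩ := Nat.exists_eq_add_of_le hmn
      rw [sum_range_add, sum_range_modulus_dirichletCharacter hχ, zero_add]
      simpa using ih k (by have := NeZero.pos m; lia)

theorem norm_sum_Ico_dirichletCharacter_le (hχ : χ ≠ 1) (a b : ℕ) :
    ‖∑ i ∈ Ico a b, χ (i : ZMod m)‖ ≤ 2 * m := by
  rcases le_total a b with hab | hba
  · rw [sum_Ico_eq_sub _ hab, two_mul]
    exact (norm_sub_le _ _).trans (add_le_add (norm_sum_range_dirichletCharacter_le hχ b)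
      (norm_sum_range_dirichletCharacter_le hχ a))
  · simp [Ico_eq_empty_of_le hba]

theorem norm_sum_Ico_LSeries_term_le (hχ : χ ≠ 1) {s : ℝ} (hs : 1 < s) (N M : ℕ) :
    ‖∑ n ∈ Ico (N + 1) M, LSeries.term (fun n ↦ χ (n : ZMod m)) s n‖
      ≤ 2 * m * ((N + 1 : ℕ) : ℝ)⁻¹ := by
  have hterm : ∀ n ∈ Ico (N + 1) M, LSeries.term (fun n ↦ χ (n : ZMod m)) s n
      = ((n : ℝ) ^ (-s)) • χ (n : ZMod m) := by
    intro n hn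
    rw [LSeries.term_of_ne_zero (by grind), Real.rpow_neg n.cast_nonneg, Complex.real_smul,
      Complex.ofReal_inv, Complex.ofReal_cpow n.cast_nonneg, Complex.ofReal_natCast, div_eq_mul_inv,
      mul_comm]
  have hanti : AntitoneOn (fun n : ℕ ↦ (n : ℝ) ^ (-s)) (Set.Ici (N + 1)) := by
    intro i hi j _ hij
    have hi₀ : 0 < i := N.succ_pos.trans_le hi
    exact Real.rpow_le_rpow_of_nonpos (by positivity) (by exact_mod_cast hij) (by linarith)
  rw [sum_congr rfl hterm]
  calc _ ≤ 2 * m * ((N + 1 : ℕ) : ℝ) ^ (-s) := norm_sum_Ico_smul_le hanti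
          (fun n _ ↦ by positivity) (fun n ↦ norm_sum_Ico_dirichletCharacter_le hχ _ n) M
    _ ≤ 2 * m * ((N + 1 : ℕ) : ℝ)⁻¹ := by
        rw [← Real.rpow_neg_one]
        gcongr
        simp

theorem norm_LFunction_sub_sum_term_le (hχ : χ ≠ 1) {s : ℝ} (hs : 1 < s) (N : ℕ) :
    ‖χ.LFunction s - ∑ n ∈ range (N + 1), LSeries.term (fun n ↦ χ (n : ZMod m)) s n‖
      ≤ 2 * m * ((N + 1 : ℕ) : ℝ)⁻¹ := by
  have hs' : 1 < (s : ℂ).re := by simpa using hs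
  rw [χ.LFunction_eq_LSeries hs']
  have hlim := (χ.LSeriesSummable_of_one_lt_re hs').hasSum.tendsto_sum_nat
  refine le_of_tendsto (hlim.sub_const _).norm ?_
  filter_upwards [eventually_ge_atTop (N + 1)] with M hM
  rw [← sum_Ico_eq_sub _ hM]
  exact norm_sum_Ico_LSeries_term_le hχ hs N M

theorem norm_LFunction_one_sub_sum_le (hχ : χ ≠ 1) (N : ℕ) :
    ‖χ.LFunction 1 - ∑ n ∈ Ioc 0 N, χ (n : ZMod m) / n‖ ≤ 2 * m * ((N + 1 : ℕ) : ℝ)⁻¹ := by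
  have hterm : ∑ n ∈ Ioc 0 N, χ (n : ZMod m) / n
      = ∑ n ∈ range (N + 1), LSeries.term (fun n ↦ χ (n : ZMod m)) 1 n := by
    rw [sum_range_add_one_eq_sum_Ioc (LSeries.term_zero _ _)]
    exact sum_congr rfl fun n hn ↦ by rw [LSeries.term_of_ne_zero (by grind), Complex.cpow_one]
  have hcont : Continuous fun s : ℂ ↦
      χ.LFunction s - ∑ n ∈ range (N + 1), LSeries.term (fun n ↦ χ (n : ZMod m)) s n :=
    (χ.differentiable_LFunction hχ).continuous.sub <| continuous_finsetSum _ fun n _ ↦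
      continuous_iff_continuousAt.2 fun s ↦ (LSeries.hasDerivAt_term _ n s).continuousAt
  have hlim := ((hcont.comp Complex.continuous_ofReal).tendsto 1).mono_left
    (nhdsWithin_le_nhds (s := Set.Ioi 1))
  simp only [Function.comp_def, Complex.ofReal_one, ← hterm] at hlim
  exact le_of_tendsto hlim.norm (eventually_mem_nhdsWithin.mono fun s hs ↦
    norm_LFunction_sub_sum_term_le hχ hs N)

theorem sum_dirichletCharacter_log_div_isBigO_one (hχ : χ ≠ 1) :
    (fun N : ℕ ↦ ∑ n ∈ Ioc 0 N, χ (n : ZMod m) / n * (Real.log n : ℂ))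
      =O[atTop] fun _ ↦ (1 : ℝ) := by
  have hanti : AntitoneOn (fun n : ℕ ↦ Real.log n / n) (Set.Ici 3) := by
    intro i hi j hj hij
    have h (k : ℕ) (hk : k ∈ Set.Ici 3) : (k : ℝ) ∈ {x | Real.exp 1 ≤ x} :=
      Real.exp_one_lt_three.le.trans (by exact_mod_cast hk)
    exact Real.log_div_self_antitoneOn (h i hi) (h j hj) (by exact_mod_cast hij)
  have hbound (N : ℕ) : ‖∑ n ∈ Ico 3 (N + 1), (Real.log n / n) • χ (n : ZMod m)‖
      ≤ 2 * m * (Real.log (3 : ℕ) / (3 : ℕ)) :=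
    norm_sum_Ico_smul_le hanti (fun n _ ↦ by positivity)
      (fun n ↦ norm_sum_Ico_dirichletCharacter_le hχ 3 n) (N + 1)
  have htail : (fun N : ℕ ↦ ∑ n ∈ Ico 3 (N + 1), (Real.log n / n) • χ (n : ZMod m))
      =O[atTop] fun _ ↦ (1 : ℝ) :=
    .of_bound _ (.of_forall fun N ↦ (hbound N).trans_eq (by rw [norm_one, mul_one]))
  have hhead := isBigO_const_const (l := atTop (α := ℕ))
    (∑ n ∈ range 3, (Real.log n / n) • χ (n : ZMod m)) (one_ne_zero (α := ℝ))
  refine (hhead.add htail).congr' ?_ .rfl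
  filter_upwards [eventually_ge_atTop 2] with N hN
  rw [sum_range_add_sum_Ico _ (by lia), sum_range_add_one_eq_sum_Ioc (by simp)]
  exact sum_congr rfl fun n _ ↦ by rw [Complex.real_smul]; push_cast; ring

/- Replace the inner sum in `sum_dirichletCharacter_vonMangoldt_div_mul` by its limit `L(1, χ)`, at
the cost of an error `O(n / N)`; then divide by `L(1, χ) ≠ 0`. -/
theorem sum_dirichletCharacter_vonMangoldt_div_isBigO_one (hχ : χ ≠ 1) :
    (fun N : ℕ ↦ ∑ n ∈ Ioc 0 N, χ (n : ZMod m) / n * (Λ n : ℂ)) =O[atTop] fun _ ↦ (1 : ℝ) := by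
  set L := χ.LFunction 1
  have herr : (fun N : ℕ ↦ ∑ n ∈ Ioc 0 N, χ (n : ZMod m) / n * (Λ n : ℂ) *
      (L - ∑ k ∈ Ioc 0 (N / n), χ (k : ZMod m) / k)) =O[atTop] fun _ ↦ (1 : ℝ) := by
    refine IsBigO.of_bound (2 * m * (Real.log 4 + 4)) ((eventually_gt_atTop 0).mono fun N hN ↦ ?_)
    have hterm (n : ℕ) (hn : n ∈ Ioc 0 N) : ‖χ (n : ZMod m) / n * (Λ n : ℂ) *
        (L - ∑ k ∈ Ioc 0 (N / n), χ (k : ZMod m) / k)‖ ≤ 2 * m / N * Λ n := by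
      have hn₀ : 0 < n := (mem_Ioc.1 hn).1
      rw [norm_mul]
      calc _ ≤ Λ n / n * (2 * m * ((N / n + 1 : ℕ) : ℝ)⁻¹) :=
            mul_le_mul (norm_dirichletCharacter_div_mul_vonMangoldt_le χ n)
              (norm_LFunction_one_sub_sum_le hχ _) (norm_nonneg _)
              (div_nonneg vonMangoldt_nonneg n.cast_nonneg)
        _ ≤ Λ n / n * (2 * m * ((N : ℝ) / n)⁻¹) := by
            have := vonMangoldt_nonneg (n := n)
            gcongr
            exact div_le_natCast_div_add_one N n
        _ = 2 * m / N * Λ n := by field_simp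
    calc _ ≤ ∑ n ∈ Ioc 0 N, 2 * m / N * Λ n := norm_sum_le_of_le _ hterm
      _ ≤ 2 * m / N * ((Real.log 4 + 4) * N) := by
          rw [← mul_sum]
          gcongr
          exact sum_vonMangoldt_le N
      _ = 2 * m * (Real.log 4 + 4) * ‖(1 : ℝ)‖ := by rw [norm_one]; field_simp
  refine ((herr.add (sum_dirichletCharacter_log_div_isBigO_one hχ)).const_mul_left L⁻¹).congr_left
    fun N ↦ ?_
  rw [sum_dirichletCharacter_vonMangoldt_div_mul, ← sum_add_distrib, mul_sum]
  refine sum_congr rfl fun n _ ↦ ?_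
  have hL : L ≠ 0 := DirichletCharacter.LFunction_apply_one_ne_zero hχ
  field_simp
  ring

theorem summable_vonMangoldt_div_nonunits (m : ℕ) [NeZero m] :
    Summable ({n : ℕ | ¬ IsUnit (n : ZMod m)}.indicator fun n ↦ Λ n / n) := by
  refine .of_norm_bounded_eventually_nat
    (vonMangoldt.summable_residueClass_non_primes_div (0 : ZMod 1)) ?_
  filter_upwards [eventually_gt_atTop m] with n hn
  have hclass : vonMangoldt.residueClass (0 : ZMod 1) n = Λ n :=
    Set.indicator_of_mem (s := {n : ℕ | (n : ZMod 1) = 0}) (Subsingleton.elim _ _) _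
  have hnonneg : 0 ≤ Λ n / n := div_nonneg vonMangoldt_nonneg n.cast_nonneg
  by_cases hp : n.Prime
  · have hunit : IsUnit (n : ZMod m) := (ZMod.isUnit_iff_coprime n m).2 <|
      Nat.coprime_of_lt_prime (NeZero.ne m) hn hp
    simp [hp, hunit]
  · rw [if_neg hp, hclass]
    exact (norm_indicator_le_norm_self _ _).trans_eq (Real.norm_of_nonneg hnonneg)

theorem sum_one_vonMangoldt_div_sub_log_isBigO_one :
    (fun N : ℕ ↦ ∑ n ∈ Ioc 0 N, (1 : DirichletCharacter ℂ m) (n : ZMod m) / n * (Λ n : ℂ)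
      - (Real.log N : ℂ)) =O[atTop] fun _ ↦ (1 : ℝ) := by
  have h := Complex.isBigO_ofReal_left.2 <| sum_vonMangoldt_div_sub_log_isBigO_one.sub
    (isBigO_one_sum_Ioc_of_summable (summable_vonMangoldt_div_nonunits m))
  refine h.congr_left fun N ↦ ?_
  rw [sub_right_comm, ← sum_sub_distrib, Complex.ofReal_sub, Complex.ofReal_sum]
  congr 1
  refine sum_congr rfl fun n _ ↦ ?_
  by_cases hn : IsUnit (n : ZMod m)
  · simp [hn, MulChar.one_apply, div_eq_inv_mul]
  · simp [hn, MulChar.map_nonunit]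

theorem sum_residueClass_div_sub_log_isBigO_one {a : ZMod m} (ha : IsUnit a) :
    (fun N : ℕ ↦ ∑ n ∈ Ioc 0 N, vonMangoldt.residueClass a n / n
      - (m.totient : ℝ)⁻¹ * Real.log N) =O[atTop] fun _ ↦ (1 : ℝ) := by
  classical
  have hχ (χ : DirichletCharacter ℂ m) :
      (fun N : ℕ ↦ ∑ n ∈ Ioc 0 N, χ (n : ZMod m) / n * (Λ n : ℂ)
        - if χ = 1 then (Real.log N : ℂ) else 0) =O[atTop] fun _ ↦ (1 : ℝ) := by
    rcases eq_or_ne χ 1 with rfl | hχ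
    · simpa using sum_one_vonMangoldt_div_sub_log_isBigO_one
    · simpa [hχ] using sum_dirichletCharacter_vonMangoldt_div_isBigO_one hχ
  have hinv : IsUnit a⁻¹ := IsUnit.of_mul_eq_one a (ZMod.inv_mul_of_unit a ha)
  refine Complex.isBigO_ofReal_left.1 <| ((IsBigO.sum (s := univ) fun χ _ ↦
    (hχ χ).const_mul_left (χ a⁻¹)).const_mul_left (m.totient : ℂ)⁻¹).congr_left fun N ↦ ?_
  simp only [mul_sub, sum_sub_distrib, mul_ite, mul_zero, sum_ite_eq', mem_univ, if_true,
    MulChar.one_apply hinv, one_mul, Finset.sum_apply]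
  push_cast
  congr 1
  simp only [vonMangoldt.residueClass_apply ha, mul_sum, sum_div]
  rw [sum_comm]
  exact sum_congr rfl fun n _ ↦ sum_congr rfl fun χ _ ↦ by ring

theorem sum_log_prime_div_sub_log_isBigO_one {a : ZMod m} (ha : IsUnit a) :
    (fun N : ℕ ↦ ∑ n ∈ Ioc 0 N,
        {p : ℕ | p.Prime ∧ (p : ZMod m) = a}.indicator (fun p ↦ Real.log p / p) n
      - (m.totient : ℝ)⁻¹ * Real.log N) =O[atTop] fun _ ↦ (1 : ℝ) := by
  refine ((sum_residueClass_div_sub_log_isBigO_one ha).sub <| isBigO_one_sum_Ioc_of_summable <|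
    vonMangoldt.summable_residueClass_non_primes_div a).congr_left fun N ↦ ?_
  rw [sub_right_comm, ← sum_sub_distrib]
  congr 1
  refine sum_congr rfl fun n _ ↦ ?_
  by_cases hp : n.Prime <;>
    simp [hp, vonMangoldt.residueClass, Set.indicator_apply, vonMangoldt_apply_prime, ite_div]

end Mertens

section HeavyTails

open Filter Topology Asymptotics Set

/-- The set of sums of subfamilies of `f` indexed by subsets of `A`. For `f q = log (1 + g q)` these
are the logarithms of the limits of divisor sums of squarefree products of elements of `A`. -/
def subsums {E : Type*} [AddCommMonoid E] [TopologicalSpace E] (f : ℕ → E) (A : Set ℕ) : Set E :=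
  {x | ∃ S ⊆ A, HasSum (S.indicator f) x}

section Subsums

variable {E : Type*} [AddCommMonoid E] [TopologicalSpace E] {f : ℕ → E} {A B : Set ℕ}

theorem add_mem_subsums_union [ContinuousAdd E] {x y : E} (hAB : Disjoint A B)
    (hx : x ∈ subsums f A) (hy : y ∈ subsums f B) : x + y ∈ subsums f (A ∪ B) := by
  obtain ⟨S, hSA, hS⟩ := hx
  obtain ⟨T, hTB, hT⟩ := hy
  refine ⟨S ∪ T, union_subset_union hSA hTB, ?_⟩
  rw [indicator_union_of_disjoint (hAB.mono hSA hTB)]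
  exact hS.add hT

end Subsums

theorem tsum_indicator_Ici {a : ℕ → ℝ} (n : ℕ) :
    ∑' k, (Ici n).indicator a k = ∑' k, a (k + n) := by
  rw [← (add_left_injective n).tsum_eq]
  · simp
  · intro k hk
    exact ⟨k - n, Nat.sub_add_cancel (mem_of_indicator_ne_zero hk)⟩

theorem tsum_indicator_Ici_eq_add_tsum_Ioi {a : ℕ → ℝ} (ha : Summable a) (n : ℕ) :
    ∑' k, (Ici n).indicator a k = a n + ∑' k, (Ioi n).indicator a k := by
  rw [← Order.Ici_succ n, tsum_indicator_Ici, tsum_indicator_Ici,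
    ((summable_nat_add_iff n).2 ha).tsum_eq_zero_add, zero_add]
  simp [add_right_comm, add_assoc]

/-- What is left of `x` after `n` steps of the greedy algorithm, which at step `i` subtracts `a i`
whenever this leaves a nonnegative number. -/
noncomputable def greedyRemainder (a : ℕ → ℝ) (x : ℝ) : ℕ → ℝ
  | 0 => x
  | n + 1 => if a n ≤ greedyRemainder a x n then greedyRemainder a x n - a n
      else greedyRemainder a x n

section Kakeya

variable {a : ℕ → ℝ} {x : ℝ}

theorem greedyRemainder_mem_Icc (ha : Summable a)
    (htail : ∀ n, a n ≤ ∑' k, (Ioi n).indicator a k) (hx : x ∈ Icc 0 (∑' n, a n)) (n : ℕ) :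
    greedyRemainder a x n ∈ Icc 0 (∑' k, (Ici n).indicator a k) := by
  induction n with
  | zero => simpa [greedyRemainder] using hx
  | succ n ih =>
    have hsplit := tsum_indicator_Ici_eq_add_tsum_Ioi ha n
    have hn := htail n
    rw [← Order.Ici_succ] at hsplit hn
    simp only [greedyRemainder, mem_Icc, Nat.succ_eq_succ, Nat.succ_eq_add_one] at ih hn hsplit ⊢
    split_ifs <;> constructor <;> linarith

theorem sum_indicator_greedy_add_greedyRemainder (n : ℕ) :
    ∑ i ∈ Finset.range n, {i | a i ≤ greedyRemainder a x i}.indicator a i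
      + greedyRemainder a x n = x := by
  induction n with
  | zero => simp [greedyRemainder]
  | succ n ih =>
    rw [Finset.sum_range_succ, greedyRemainder, indicator_apply]
    simp only [mem_ofPred_eq]
    split_ifs <;> linarith

/- Kakeya's theorem: the greedy remainders are squeezed to zero by the tails. -/
theorem Icc_subset_subsums (ha₀ : ∀ n, 0 ≤ a n) (ha : Summable a)
    (htail : ∀ n, a n ≤ ∑' k, (Ioi n).indicator a k) : Icc 0 (∑' n, a n) ⊆ subsums a univ := by
  intro x hx
  have hrem := greedyRemainder_mem_Icc ha htail hx
  have hlim : Tendsto (greedyRemainder a x) atTop (𝓝 0) := by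
    refine squeeze_zero (fun n ↦ (hrem n).1) (fun n ↦ (hrem n).2) ?_
    simpa only [tsum_indicator_Ici] using tendsto_sum_nat_add a
  refine ⟨{i | a i ≤ greedyRemainder a x i}, subset_univ _, ?_⟩
  rw [hasSum_iff_tendsto_nat_of_nonneg (indicator_nonneg fun i _ ↦ ha₀ i)]
  simpa [← eq_sub_iff_add_eq.2 (sum_indicator_greedy_add_greedyRemainder _)]
    using hlim.const_sub x

end Kakeya

/-- The sum of `q ^ (-r)` over the elements `q > N` of `A` is of larger order than `N ^ (-r)`.
This is the tail condition under which Kakeya's theorem applies to subsums over large elements. -/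
def HasHeavyTail (A : Set ℕ) (r : ℝ) : Prop :=
  (fun N : ℕ ↦ (N : ℝ) ^ (-r)) =o[atTop]
    fun N ↦ ∑' q, (A ∩ Ioi N).indicator (fun q : ℕ ↦ (q : ℝ) ^ (-r)) q

variable {A : Set ℕ} {r : ℝ}

theorem summable_indicator_of_le_rpow (hr : 1 < r) {b : ℕ → ℝ} {c : ℝ}
    (hb₀ : ∀ q ∈ A, 0 ≤ b q) (hb : ∀ q ∈ A, b q ≤ c * (q : ℝ) ^ (-r)) :
    Summable (A.indicator b) := by
  refine .of_nonneg_of_le (indicator_nonneg hb₀) (fun q ↦ ?_)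
    ((Real.summable_nat_rpow.2 (neg_lt_neg hr)).mul_left |c|)
  refine indicator_apply_le' (fun hq ↦ (hb q hq).trans ?_) fun _ ↦ by positivity
  gcongr
  exact le_abs_self c

theorem HasHeavyTail.eventually_mul_rpow_le_tsum (hA : HasHeavyTail A r) (hr : 1 < r) {b : ℕ → ℝ}
    {c₁ c₂ : ℝ} (hc₁ : 0 < c₁)
    (hb : ∀ᶠ q : ℕ in atTop, q ∈ A → b q ∈ Icc (c₁ * (q : ℝ) ^ (-r)) (c₂ * (q : ℝ) ^ (-r)))
    {D : ℝ} (hD : 0 < D) :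
    ∀ᶠ N : ℕ in atTop, D * (N : ℝ) ^ (-r) ≤ ∑' q, (A ∩ Ioi N).indicator b q := by
  filter_upwards [hA.bound (div_pos hc₁ hD), eventually_forall_ge_atTop.2 hb] with N hN hbN
  have hb' : ∀ q ∈ A ∩ Ioi N, b q ∈ Icc (c₁ * (q : ℝ) ^ (-r)) (c₂ * (q : ℝ) ^ (-r)) :=
    fun q hq ↦ hbN q hq.2.le hq.1
  rw [Real.norm_of_nonneg (by positivity),
    Real.norm_of_nonneg (tsum_nonneg (indicator_nonneg fun q _ ↦ by positivity)),
    div_mul_eq_mul_div, le_div_iff₀ hD, mul_comm, ← tsum_mul_left] at hN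
  refine hN.trans (Summable.tsum_le_tsum (fun q ↦ ?_) ?_ ?_)
  · by_cases hq : q ∈ A ∩ Ioi N
    · simpa [hq] using (hb' q hq).1
    · simp [hq]
  · exact ((Real.summable_nat_rpow.2 (neg_lt_neg hr)).indicator _).mul_left _
  · exact summable_indicator_of_le_rpow hr
      (fun q hq ↦ (by positivity : 0 ≤ c₁ * (q : ℝ) ^ (-r)).trans (hb' q hq).1)
      fun q hq ↦ (hb' q hq).2

theorem HasHeavyTail.eventually_Icc_subset_subsums (hA : HasHeavyTail A r) (hr : 1 < r)
    {b : ℕ → ℝ} {c₁ c₂ : ℝ} (hc₁ : 0 < c₁)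
    (hb : ∀ᶠ q : ℕ in atTop, q ∈ A → b q ∈ Icc (c₁ * (q : ℝ) ^ (-r)) (c₂ * (q : ℝ) ^ (-r)))
    (D : ℝ) : ∀ᶠ N : ℕ in atTop, Icc 0 (D * (N : ℝ) ^ (-r)) ⊆ subsums b (A ∩ Ioi N) := by
  have hmax : 0 < max 1 (max c₂ D) := one_pos.trans_le (le_max_left _ _)
  filter_upwards [eventually_forall_ge_atTop.2 (hA.eventually_mul_rpow_le_tsum hr hc₁ hb hmax),
    eventually_forall_ge_atTop.2 hb] with N htail hbN
  have hb' : ∀ q ∈ A ∩ Ioi N, b q ∈ Icc (c₁ * (q : ℝ) ^ (-r)) (c₂ * (q : ℝ) ^ (-r)) :=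
    fun q hq ↦ hbN q hq.2.le hq.1
  have hb₀ : ∀ q ∈ A ∩ Ioi N, 0 ≤ b q :=
    fun q hq ↦ (by positivity : 0 ≤ c₁ * (q : ℝ) ^ (-r)).trans (hb' q hq).1
  have hkakeya := Icc_subset_subsums (indicator_nonneg hb₀)
    (summable_indicator_of_le_rpow hr hb₀ fun q hq ↦ (hb' q hq).2) fun n ↦ ?_
  · intro x hx
    obtain ⟨S, -, hS⟩ := hkakeya ⟨hx.1, hx.2.trans <| le_trans (by gcongr; simp) (htail N le_rfl)⟩
    exact ⟨S ∩ (A ∩ Ioi N), inter_subset_right, by rwa [← indicator_indicator]⟩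
  · by_cases hn : n ∈ A ∩ Ioi N
    · have htail_eq : Ioi n ∩ (A ∩ Ioi N) = A ∩ Ioi n := by
        ext q
        have := hn.2
        simp only [mem_inter_iff, mem_Ioi] at this ⊢
        grind
      rw [indicator_of_mem hn, indicator_indicator, htail_eq]
      calc b n ≤ c₂ * (n : ℝ) ^ (-r) := (hb' n hn).2
        _ ≤ max 1 (max c₂ D) * (n : ℝ) ^ (-r) := by gcongr; simp
        _ ≤ _ := htail n hn.2.le
    · rw [indicator_of_notMem hn]
      exact tsum_nonneg (indicator_nonneg fun q _ ↦ indicator_nonneg hb₀ q)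

theorem eventually_one_le_sum_Ioc_of_isBigO {a : ℕ → ℝ} {c : ℝ} (hc : 0 < c)
    (h : (fun N : ℕ ↦ ∑ n ∈ Finset.Ioc 0 N, a n - c * Real.log N) =O[atTop] fun _ ↦ (1 : ℝ)) :
    ∃ K : ℕ, 0 < K ∧ ∀ᶠ N : ℕ in atTop, 1 ≤ ∑ n ∈ Finset.Ioc N (K * N), a n := by
  obtain ⟨D, hD⟩ := h.bound
  have hlog : Tendsto (fun N : ℕ ↦ Real.log N) atTop atTop :=
    Real.tendsto_log_atTop.comp tendsto_natCast_atTop_atTop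
  obtain ⟨K, hKlog, hK₀⟩ :=
    ((hlog.eventually_ge_atTop ((2 * D + 1) / c)).and (eventually_gt_atTop 0)).exists
  refine ⟨K, hK₀, ?_⟩
  filter_upwards [eventually_forall_ge_atTop.2 hD, eventually_gt_atTop 0] with N hN hN₀
  have hNKN : N ≤ K * N := Nat.le_mul_of_pos_left N hK₀
  have hsplit := Finset.sum_Ioc_consecutive a N.zero_le hNKN
  have hupper := (abs_le.1 (hN N le_rfl)).2
  have hlower := (abs_le.1 (hN (K * N) hNKN)).1
  rw [Nat.cast_mul, Real.log_mul (by positivity) (by positivity)] at hlower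
  rw [div_le_iff₀ hc] at hKlog
  rw [norm_one] at hupper hlower
  linarith

theorem log_div_mul_le_rpow (hr : 1 < r) {q x : ℝ} (hq : 1 < q) (hqx : q ≤ x) :
    Real.log q / q * (x ^ (1 - r) / Real.log x) ≤ q ^ (-r) := by
  have hq₀ : 0 < q := one_pos.trans hq
  have hlog : 0 < Real.log q := Real.log_pos hq
  calc Real.log q / q * (x ^ (1 - r) / Real.log x)
      ≤ Real.log q / q * (q ^ (1 - r) / Real.log q) := by
        gcongr ?_ * (?_ / ?_)
        · exact Real.rpow_le_rpow_of_nonpos hq₀ hqx (by linarith)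
        · exact Real.log_le_log hq₀ hqx
    _ = q ^ (-r) := by
        rw [sub_eq_add_neg, Real.rpow_add hq₀, Real.rpow_one]
        field_simp

theorem rpow_neg_isLittleO_rpow_one_sub_div_log (r : ℝ) :
    (fun x : ℝ ↦ x ^ (-r)) =o[atTop] fun x ↦ x ^ (1 - r) / Real.log x := by
  refine (Real.isLittleO_log_id_atTop.mul_isBigO
    (isBigO_refl (fun x ↦ x ^ (-r) / Real.log x) atTop)).congr' ?_ ?_ <;>
  filter_upwards [eventually_gt_atTop 1] with x hx
  · have := Real.log_pos hx
    field_simp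
  · rw [sub_eq_add_neg, Real.rpow_add (by linarith), Real.rpow_one, id, mul_div_assoc]

theorem hasHeavyTail_of_sum_log_div (hr : 1 < r) {c : ℝ} (hc : 0 < c)
    (h : (fun N : ℕ ↦ ∑ n ∈ Finset.Ioc 0 N, A.indicator (fun q : ℕ ↦ Real.log q / q) n
      - c * Real.log N) =O[atTop] fun _ ↦ (1 : ℝ)) : HasHeavyTail A r := by
  obtain ⟨K, hK₀, hmass⟩ := eventually_one_le_sum_Ioc_of_isBigO hc h
  have hKN : Tendsto (fun N : ℕ ↦ (K : ℝ) * N) atTop atTop :=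
    tendsto_natCast_atTop_atTop.const_mul_atTop (by positivity)
  have hsmall := ((rpow_neg_isLittleO_rpow_one_sub_div_log r).comp_tendsto hKN).const_mul_left
    ((K : ℝ) ^ r)
  refine (hsmall.congr_left fun N ↦ ?_).trans_isBigO (IsBigO.of_bound' ?_)
  · rw [Function.comp_apply, Real.mul_rpow (by positivity) (by positivity), ← mul_assoc,
      ← Real.rpow_add (by positivity), add_neg_cancel, Real.rpow_zero, one_mul]
  filter_upwards [hmass, eventually_ge_atTop 1] with N hN hN₁
  set f : ℕ → ℝ := fun q ↦ (q : ℝ) ^ (-r)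
  have hscale : 0 ≤ (K * N : ℝ) ^ (1 - r) / Real.log (K * N) :=
    div_nonneg (by positivity) (by exact_mod_cast Real.log_natCast_nonneg (K * N))
  have hterm : ∀ q ∈ Finset.Ioc N (K * N), A.indicator (fun q : ℕ ↦ Real.log q / q) q *
      ((K * N : ℝ) ^ (1 - r) / Real.log (K * N)) ≤ (A ∩ Ioi N).indicator f q := by
    intro q hq
    obtain ⟨hNq, hqKN⟩ := Finset.mem_Ioc.1 hq
    by_cases hqA : q ∈ A
    · rw [indicator_of_mem hqA, indicator_of_mem (show q ∈ A ∩ Ioi N from ⟨hqA, hNq⟩)]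
      exact log_div_mul_le_rpow hr (by exact_mod_cast hN₁.trans_lt hNq) (by exact_mod_cast hqKN)
    · simp [hqA]
  rw [Function.comp_apply, Real.norm_of_nonneg hscale]
  refine le_trans ?_ (le_abs_self _)
  calc (K * N : ℝ) ^ (1 - r) / Real.log (K * N)
      ≤ ∑ q ∈ Finset.Ioc N (K * N), (A ∩ Ioi N).indicator f q := by
        refine (le_mul_of_one_le_left hscale hN).trans ?_
        rw [Finset.sum_mul]
        exact Finset.sum_le_sum hterm
    _ ≤ ∑' q, (A ∩ Ioi N).indicator f q :=
        ((Real.summable_nat_rpow.2 (neg_lt_neg hr)).indicator _).sum_le_tsum _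
          fun q _ ↦ indicator_nonneg (fun q _ ↦ by positivity) q

theorem hasHeavyTail_primes_residueClass (hr : 1 < r) {m : ℕ} [NeZero m] {a : ZMod m}
    (ha : IsUnit a) : HasHeavyTail {p : ℕ | p.Prime ∧ (p : ZMod m) = a} r :=
  hasHeavyTail_of_sum_log_div hr (by simp [Nat.totient_pos, NeZero.pos m])
    (sum_log_prime_div_sub_log_isBigO_one ha)

end HeavyTails

section ConnectedComponents

open Set Function

theorem iUnion_subset_or_subset_of_chain {α : Type*} {u v : Set α} {s : ℕ → Set α}
    (huv : Disjoint u v) (hs : ∀ n, s n ⊆ u ∨ s n ⊆ v)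
    (hchain : ∀ n, (s n ∩ s (n + 1)).Nonempty) : ⋃ n, s n ⊆ u ∨ ⋃ n, s n ⊆ v := by
  wlog h₀ : s 0 ⊆ u generalizing u v
  · exact (this huv.symm (fun n ↦ (hs n).symm) ((hs 0).resolve_left h₀)).symm
  refine Or.inl (iUnion_subset fun n ↦ ?_)
  induction n with
  | zero => exact h₀
  | succ n ih =>
    obtain ⟨x, hx, hx'⟩ := hchain n
    exact (hs (n + 1)).resolve_right fun h ↦ disjoint_left.1 huv (ih hx) (h hx')

variable {X : Type*} [TopologicalSpace X]

theorem connectedComponents_mk_eq_of_isPreconnected {E S : Set X} (hS : IsPreconnected S)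
    (hSE : S ⊆ E) {x y : E} (hx : (x : X) ∈ S) (hy : (y : X) ∈ S) :
    ConnectedComponents.mk x = ConnectedComponents.mk y := by
  have hS' : IsPreconnected (Subtype.val ⁻¹' S : Set E) := by
    rwa [← Topology.IsInducing.subtypeVal.isPreconnected_image, Subtype.image_preimage_coe,
      inter_eq_right.2 hSE]
  exact ConnectedComponents.coe_eq_coe'.2 (hS'.subset_connectedComponent hy hx)

theorem finite_connectedComponents_sUnion {𝒞 : Set (Set X)} (hfin : 𝒞.Finite)
    (hconn : ∀ C ∈ 𝒞, IsPreconnected C) : Finite (ConnectedComponents (⋃₀ 𝒞)) := by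
  have hcover : (univ : Set (ConnectedComponents (⋃₀ 𝒞))) ⊆
      ⋃ C ∈ 𝒞, ConnectedComponents.mk '' (Subtype.val ⁻¹' C) := by
    intro c _
    obtain ⟨⟨x, C, hC, hx⟩, rfl⟩ := ConnectedComponents.surjective_coe c
    exact mem_iUnion₂.2 ⟨C, hC, _, hx, rfl⟩
  refine finite_univ_iff.1 ((hfin.biUnion fun C hC ↦ Subsingleton.finite ?_).subset hcover)
  rintro _ ⟨x, hx, rfl⟩ _ ⟨y, hy, rfl⟩
  exact connectedComponents_mk_eq_of_isPreconnected (hconn C hC) (subset_sUnion_of_mem hC) hx hy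

theorem card_connectedComponents_iUnion {ι : Type*} [Finite ι] {K : ι → Set X}
    (hclosed : ∀ i, IsClosed (K i)) (hdisj : Pairwise (Disjoint on K))
    (hconn : ∀ i, IsConnected (K i)) :
    Nat.card (ConnectedComponents (⋃ i, K i)) = Nat.card ι := by
  choose x hx using fun i ↦ (hconn i).nonempty
  have hclopen (i : ι) : IsClopen (Subtype.val ⁻¹' K i : Set (⋃ i, K i)) := by
    refine ⟨(hclosed i).preimage continuous_subtype_val, ?_⟩
    have hcompl : (Subtype.val ⁻¹' K i : Set (⋃ i, K i))
        = (⋃ j : {j // j ≠ i}, Subtype.val ⁻¹' K j)ᶜ := by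
      ext ⟨y, hy⟩
      obtain ⟨j, hj⟩ := mem_iUnion.1 hy
      simp only [mem_preimage, mem_compl_iff, mem_iUnion, Subtype.exists, not_exists]
      refine ⟨fun hi k hk hyk ↦ disjoint_left.1 (hdisj hk) hyk hi, fun h ↦ ?_⟩
      rwa [← not_not.1 fun hji ↦ h j hji hj]
    rw [hcompl, isOpen_compl_iff]
    exact isClosed_iUnion_of_finite fun j ↦ (hclosed j).preimage continuous_subtype_val
  refine (Nat.card_eq_of_bijective
    (fun i ↦ ConnectedComponents.mk (⟨x i, mem_iUnion_of_mem i (hx i)⟩ : ⋃ i, K i)) ⟨?_, ?_⟩).symm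
  · intro i j hij
    have hmem := (hclopen j).connectedComponent_subset (hx j)
      (ConnectedComponents.coe_eq_coe'.1 hij)
    by_contra hne
    exact disjoint_left.1 (hdisj hne) (hx i) hmem
  · intro c
    obtain ⟨⟨y, hy⟩, rfl⟩ := ConnectedComponents.surjective_coe c
    obtain ⟨i, hi⟩ := mem_iUnion.1 hy
    exact ⟨i, connectedComponents_mk_eq_of_isPreconnected (hconn i).isPreconnected
      (subset_iUnion K i) (hx i) hi⟩

/-- The `i`-th block of a sequence of sets cut at `m`: the closure of `K i` when `i < m`, and the
closure of the whole tail `⋃ k ≥ m, K k` when `i = m`. Finitely many blocks cover the closure of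
an infinite union. -/
def closureBlock (K : ℕ → Set X) (m i : ℕ) : Set X :=
  closure (⋃ k ∈ {k | min k m = i}, K k)

theorem iUnion_closureBlock (K : ℕ → Set X) (m : ℕ) :
    ⋃ i : Fin (m + 1), closureBlock K m i = closure (⋃ k, K k) := by
  simp only [closureBlock]
  rw [← closure_iUnion_of_finite]
  congr 1
  ext x
  simp only [mem_iUnion, mem_ofPred_eq, exists_prop]
  exact ⟨fun ⟨_, k, _, hx⟩ ↦ ⟨k, hx⟩,
    fun ⟨k, hx⟩ ↦ ⟨⟨min k m, by omega⟩, k, rfl, hx⟩⟩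

theorem subset_closureBlock (K : ℕ → Set X) {m i : ℕ} (hi : i ≤ m) : K i ⊆ closureBlock K m i :=
  (subset_biUnion_of_mem (s := {k | min k m = i}) (u := K) (min_eq_left hi)).trans subset_closure

theorem closureBlock_subset {K : ℕ → Set X} {m i : ℕ} {F : Set X} (hF : IsClosed F)
    (h : ∀ k, min k m = i → K k ⊆ F) : closureBlock K m i ⊆ F :=
  closure_minimal (iUnion₂_subset h) hF

theorem isPreconnected_closureBlock {K : ℕ → Set X} {m : ℕ} (hK : ∀ k, IsPreconnected (K k))
    (hchain : ∀ k, m ≤ k → (K k ∩ K (k + 1)).Nonempty) (i : ℕ) :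
    IsPreconnected (closureBlock K m i) := by
  refine IsPreconnected.closure (IsPreconnected.biUnion_of_chain ⟨fun a ha b hb c hc ↦ ?_⟩
    (fun k _ ↦ hK k) fun k hk hk' ↦ ?_)
  · simp only [mem_ofPred_eq] at ha hb ⊢
    obtain ⟨hac, hcb⟩ := hc
    omega
  · simp only [mem_ofPred_eq, Order.succ_eq_add_one] at hk hk'
    exact hchain k (by omega)

end ConnectedComponents

section DivisorSums

open Set
open scoped Pointwise

/-- The divisor sum `∑_{d ∣ n} g d` of a completely multiplicative function `g`; for
`g d = χ d * d ^ (-r)` it is the twisted divisor function. -/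
def divisorSum {R : Type*} [CommSemiring R] (g : ℕ →* R) (n : ℕ) : R := ∑ d ∈ n.divisors, g d

section CommSemiring

variable {R : Type*} [CommSemiring R] (g : ℕ →* R)

theorem divisorSum_one : divisorSum g 1 = 1 := by simp [divisorSum]

theorem divisorSum_mul_of_coprime {m n : ℕ} (h : m.Coprime n) :
    divisorSum g (m * n) = divisorSum g m * divisorSum g n := by
  simp only [divisorSum, Nat.divisors_mul, Finset.mul_def]
  rw [Finset.sum_image h.mul_injOn_divisors, Finset.sum_product, Finset.sum_mul_sum]
  simp only [map_mul]

theorem divisorSum_prime_pow {p : ℕ} (hp : p.Prime) (a : ℕ) :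
    divisorSum g (p ^ a) = ∑ i ∈ Finset.range (a + 1), g p ^ i := by
  simp [divisorSum, Nat.sum_divisors_prime_pow hp]

theorem divisorSum_prime {p : ℕ} (hp : p.Prime) : divisorSum g p = 1 + g p := by
  simpa [Finset.sum_range_succ] using divisorSum_prime_pow g hp 1

theorem divisorSum_prod_primes {s : Finset ℕ} (hs : ∀ p ∈ s, p.Prime) :
    divisorSum g (∏ p ∈ s, p) = ∏ p ∈ s, (1 + g p) := by
  induction s using Finset.induction_on with
  | empty => simp [divisorSum_one]
  | insert p s hp ih =>
    simp only [Finset.forall_mem_insert] at hs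
    have hcop : p.Coprime (∏ q ∈ s, q) := Nat.Coprime.prod_right fun q hq ↦
      (Nat.coprime_primes hs.1 (hs.2 q hq)).2 (ne_of_mem_of_not_mem hq hp).symm
    rw [Finset.prod_insert hp, Finset.prod_insert hp, divisorSum_mul_of_coprime g hcop,
      divisorSum_prime g hs.1, ih hs.2]

end CommSemiring

/-- The `k`-rough numbers: the positive integers all of whose prime factors are at least `k`. -/
def roughNumbers (k : ℕ) : Set ℕ := {n | 0 < n ∧ ∀ p, p.Prime → p ∣ n → k ≤ p}

theorem roughNumbers_zero : roughNumbers 0 = {n | 0 < n} := by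
  simp [roughNumbers]

theorem one_mem_roughNumbers (k : ℕ) : 1 ∈ roughNumbers k :=
  ⟨one_pos, fun _ hp h ↦ absurd (Nat.dvd_one.1 h) hp.ne_one⟩

theorem mem_roughNumbers_of_dvd {k d n : ℕ} (hn : n ∈ roughNumbers k) (hd : d ∣ n) :
    d ∈ roughNumbers k :=
  ⟨Nat.pos_of_dvd_of_pos hd hn.1, fun p hp hpd ↦ hn.2 p hp (hpd.trans hd)⟩

theorem le_of_mem_roughNumbers {k n : ℕ} (hn : n ∈ roughNumbers k) (hn₁ : n ≠ 1) : k ≤ n :=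
  (hn.2 _ (Nat.minFac_prime hn₁) (Nat.minFac_dvd n)).trans (Nat.minFac_le hn.1)

theorem prod_mem_roughNumbers {k : ℕ} {s : Finset ℕ} (hs : ∀ p ∈ s, p.Prime ∧ k ≤ p) :
    ∏ p ∈ s, p ∈ roughNumbers k := by
  refine ⟨Finset.prod_pos fun p hp ↦ (hs p hp).1.pos, fun q hq hqs ↦ ?_⟩
  obtain ⟨p, hp, hqp⟩ := (Prime.dvd_finsetProd_iff hq.prime _).1 hqs
  rw [(Nat.prime_dvd_prime_iff_eq hq (hs p hp).1).1 hqp]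
  exact (hs p hp).2

theorem mem_roughNumbers_succ_iff {k n : ℕ} :
    n ∈ roughNumbers (k + 1) ↔ n ∈ roughNumbers k ∧ (k.Prime → ¬ k ∣ n) := by
  refine ⟨fun h ↦ ⟨⟨h.1, fun p hp hpn ↦ (Nat.le_succ k).trans (h.2 p hp hpn)⟩,
    fun hk hkn ↦ (h.2 k hk hkn).not_gt k.lt_succ_self⟩, fun ⟨h, hk⟩ ↦ ⟨h.1, fun p hp hpn ↦ ?_⟩⟩
  refine (h.2 p hp hpn).lt_of_ne ?_
  rintro rfl
  exact hk hp hpn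

theorem roughNumbers_succ_of_not_prime {k : ℕ} (hk : ¬ k.Prime) :
    roughNumbers (k + 1) = roughNumbers k := by
  ext n
  simp [mem_roughNumbers_succ_iff, hk]

theorem coprime_of_mem_roughNumbers_succ {p n : ℕ} (hp : p.Prime)
    (hn : n ∈ roughNumbers (p + 1)) : p.Coprime n :=
  (hp.coprime_iff_not_dvd).2 ((mem_roughNumbers_succ_iff.1 hn).2 hp)

theorem mem_roughNumbers_prime_iff {p n : ℕ} (hp : p.Prime) :
    n ∈ roughNumbers p ↔ ∃ a, ∃ b ∈ roughNumbers (p + 1), n = p ^ a * b := by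
  constructor
  · intro hn
    obtain ⟨a, b, hpb, rfl⟩ := Nat.exists_eq_pow_mul_and_not_dvd hn.1.ne' p hp.ne_one
    exact ⟨a, b, mem_roughNumbers_succ_iff.2
      ⟨mem_roughNumbers_of_dvd hn (dvd_mul_left b _), fun _ ↦ hpb⟩, rfl⟩
  · rintro ⟨a, b, hb, rfl⟩
    refine ⟨mul_pos (pow_pos hp.pos a) hb.1, fun q hq hqn ↦ ?_⟩
    rcases hq.dvd_mul.1 hqn with h | h
    · exact ((Nat.prime_dvd_prime_iff_eq hq hp).1 (hq.dvd_of_dvd_pow h)).ge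
    · exact (mem_roughNumbers_succ_iff.1 hb).1.2 q hq h

theorem divisorSum_image_roughNumbers_prime {R : Type*} [CommSemiring R] (g : ℕ →* R) {p : ℕ}
    (hp : p.Prime) : divisorSum g '' roughNumbers p =
      ⋃ a, divisorSum g (p ^ a) • divisorSum g '' roughNumbers (p + 1) := by
  ext x
  simp only [mem_image, mem_iUnion, mem_smul_set, smul_eq_mul, exists_exists_and_eq_and]
  constructor
  · rintro ⟨n, hn, rfl⟩
    obtain ⟨a, b, hb, rfl⟩ := (mem_roughNumbers_prime_iff hp).1 hn
    exact ⟨a, b, hb, (divisorSum_mul_of_coprime g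
      ((coprime_of_mem_roughNumbers_succ hp hb).pow_left a)).symm⟩
  · rintro ⟨a, b, hb, rfl⟩
    exact ⟨p ^ a * b, (mem_roughNumbers_prime_iff hp).2 ⟨a, b, hb, rfl⟩,
      divisorSum_mul_of_coprime g ((coprime_of_mem_roughNumbers_succ hp hb).pow_left a)⟩

variable {𝕜 : Type*} [NormedField 𝕜] {g : ℕ →* 𝕜}

/-- The closure of the set of divisor sums of `k`-rough numbers. It is the closure of the whole
image at `k = 0`, and is recovered from `k + 1` by adjoining one Euler factor. -/
def roughClosure (g : ℕ →* 𝕜) (k : ℕ) : Set 𝕜 := closure (divisorSum g '' roughNumbers k)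

theorem isClosed_roughClosure (g : ℕ →* 𝕜) (k : ℕ) : IsClosed (roughClosure g k) :=
  isClosed_closure

theorem one_mem_roughClosure (g : ℕ →* 𝕜) (k : ℕ) : 1 ∈ roughClosure g k :=
  subset_closure ⟨1, one_mem_roughNumbers k, divisorSum_one g⟩

theorem roughClosure_succ_of_not_prime (g : ℕ →* 𝕜) {k : ℕ} (hk : ¬ k.Prime) :
    roughClosure g (k + 1) = roughClosure g k := by
  rw [roughClosure, roughNumbers_succ_of_not_prime hk, roughClosure]

theorem roughClosure_prime (g : ℕ →* 𝕜) {p : ℕ} (hp : p.Prime) :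
    roughClosure g p = closure (⋃ a, divisorSum g (p ^ a) • roughClosure g (p + 1)) := by
  simp only [roughClosure, ← closure_smul₀, divisorSum_image_roughNumbers_prime g hp]
  exact (closure_mono (iUnion_mono fun a ↦ subset_closure)).antisymm
    (closure_minimal (iUnion_subset fun a ↦ closure_mono (subset_iUnion_of_subset a Subset.rfl))
      isClosed_closure)

theorem smul_roughClosure_subset (g : ℕ →* 𝕜) {p : ℕ} (hp : p.Prime) (a : ℕ) :
    divisorSum g (p ^ a) • roughClosure g (p + 1) ⊆ roughClosure g p := by
  rw [roughClosure_prime g hp]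
  exact subset_closure.trans' (subset_iUnion_of_subset a Subset.rfl)

theorem roughClosure_succ_of_eq_zero {k : ℕ} (hk : k.Prime → g k = 0) :
    roughClosure g (k + 1) = roughClosure g k := by
  by_cases hp : k.Prime
  · have hone (a : ℕ) : divisorSum g (k ^ a) = 1 := by
      simp [divisorSum_prime_pow g hp, hk hp, Finset.sum_range_succ']
    simp only [roughClosure_prime g hp, hone, one_smul, iUnion_const]
    exact (isClosed_roughClosure g _).closure_eq.symm
  · exact roughClosure_succ_of_not_prime g hp

theorem roughClosure_eq_of_forall_eq_zero {j k : ℕ} (hjk : j ≤ k)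
    (h : ∀ p, p.Prime → j ≤ p → p < k → g p = 0) : roughClosure g k = roughClosure g j := by
  induction k, hjk using Nat.le_induction with
  | base => rfl
  | succ k hjk ih =>
    rw [roughClosure_succ_of_eq_zero fun hk ↦ h k hk hjk k.lt_succ_self,
      ih fun p hp hjp hpk ↦ h p hp hjp (hpk.trans k.lt_succ_self)]

theorem norm_divisorSum_le (hsum : Summable (‖g ·‖)) (n : ℕ) : ‖divisorSum g n‖ ≤ ∑' d, ‖g d‖ :=
  (norm_sum_le _ _).trans (hsum.sum_le_tsum _ fun _ _ ↦ norm_nonneg _)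

theorem roughClosure_subset_closedBall_zero (hsum : Summable (‖g ·‖)) (k : ℕ) :
    roughClosure g k ⊆ Metric.closedBall 0 (∑' d, ‖g d‖) := by
  refine closure_minimal ?_ Metric.isClosed_closedBall
  rintro _ ⟨n, -, rfl⟩
  exact mem_closedBall_zero_iff.2 (norm_divisorSum_le hsum n)

theorem isCompact_roughClosure [ProperSpace 𝕜] (hsum : Summable (‖g ·‖)) (k : ℕ) :
    IsCompact (roughClosure g k) :=
  (isCompact_closedBall _ _).of_isClosed_subset (isClosed_roughClosure g k)
    (roughClosure_subset_closedBall_zero hsum k)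

theorem eventually_roughClosure_subset_closedBall_one (hsum : Summable (‖g ·‖)) {ε : ℝ}
    (hε : 0 < ε) : ∀ᶠ k in Filter.atTop, roughClosure g k ⊆ Metric.closedBall 1 ε := by
  obtain ⟨s, hs⟩ := summable_iff_vanishing_norm.1 hsum ε hε
  filter_upwards [Filter.eventually_gt_atTop (s.sup id)] with k hk
  refine closure_minimal ?_ Metric.isClosed_closedBall
  rintro _ ⟨n, hn, rfl⟩
  have hdisj : Disjoint (n.divisors.erase 1) s := by
    refine Finset.disjoint_left.2 fun d hd hds ↦ ?_
    obtain ⟨hd₁, hdn⟩ := Finset.mem_erase.1 hd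
    have hkd := le_of_mem_roughNumbers
      (mem_roughNumbers_of_dvd hn (Nat.dvd_of_mem_divisors hdn)) hd₁
    exact (hk.trans_le hkd).not_ge (Finset.le_sup (f := id) hds)
  rw [Metric.mem_closedBall, dist_eq_norm]
  calc ‖divisorSum g n - 1‖ = ‖∑ d ∈ n.divisors.erase 1, g d‖ := by
        rw [divisorSum, ← Finset.add_sum_erase _ _ (Nat.one_mem_divisors.2 hn.1.ne'), map_one,
          add_sub_cancel_left]
    _ ≤ ∑ d ∈ n.divisors.erase 1, ‖g d‖ := norm_sum_le _ _
    _ ≤ ε := (le_abs_self _).trans (hs _ hdisj).le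

end DivisorSums

section Absorption

open Set
open scoped Pointwise

variable {𝕜 : Type*} [NormedField 𝕜] {K : Subfield 𝕜} {g : ℕ →* 𝕜} {δ δ' : ℝ} {C D : Set 𝕜}

/-- `C` absorbs the ratios of `K` up to `δ` if every `1 + w` with `w ∈ K` and `‖w‖ ≤ δ` is a ratio
of two points of `C`. Consequently two dilates of `C` by factors with such a ratio intersect. -/
def AbsorbsRatios (K : Subfield 𝕜) (δ : ℝ) (C : Set 𝕜) : Prop :=
  ∀ w ∈ K, ‖w‖ ≤ δ → ((1 + w) • C ∩ C).Nonempty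

theorem AbsorbsRatios.mono (h : AbsorbsRatios K δ C) (hδ : δ' ≤ δ) (hCD : C ⊆ D) :
    AbsorbsRatios K δ' D :=
  fun w hw hwδ ↦ (h w hw (hwδ.trans hδ)).mono
    (inter_subset_inter (smul_set_mono hCD) hCD)

theorem AbsorbsRatios.smul (h : AbsorbsRatios K δ C) (c : 𝕜) : AbsorbsRatios K δ (c • C) := by
  intro w hw hwδ
  obtain ⟨_, ⟨t, ht, rfl⟩, ht'⟩ := h w hw hwδ
  refine ⟨c * ((1 + w) * t), ⟨c * t, smul_mem_smul_set ht, ?_⟩, smul_mem_smul_set ht'⟩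
  simp only [smul_eq_mul]
  ring

theorem exists_divisorSum_prime_pow_succ_eq {p : ℕ} (hp : p.Prime) (hgK : g p ∈ K)
    (hhalf : ‖g p‖ ≤ 1 / 2) (a : ℕ) : ∃ w ∈ K, ‖w‖ ≤ 3 * ‖g p‖ ^ (a + 1) ∧
      divisorSum g (p ^ (a + 1)) = (1 + w) * divisorSum g (p ^ a) := by
  have hgeom : divisorSum g (p ^ a) * (1 - g p) = 1 - g p ^ (a + 1) := by
    rw [divisorSum_prime_pow g hp, geom_sum_mul_neg]
  have hfactor : ‖1 - g p‖ ≤ 3 / 2 := (norm_sub_le _ _).trans (by rw [norm_one]; linarith)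
  have hpow : ‖g p‖ ^ (a + 1) ≤ 1 / 2 :=
    (pow_le_of_le_one (norm_nonneg _) (by linarith) a.succ_ne_zero).trans hhalf
  have hnum : 1 / 2 ≤ ‖1 - g p ^ (a + 1)‖ := by
    have := norm_sub_norm_le 1 (g p ^ (a + 1))
    rw [norm_one, norm_pow] at this
    linarith
  have hlower : 1 / 3 ≤ ‖divisorSum g (p ^ a)‖ := by
    rw [← hgeom, norm_mul] at hnum
    nlinarith [norm_nonneg (divisorSum g (p ^ a))]
  have hne : divisorSum g (p ^ a) ≠ 0 := norm_pos_iff.1 (by linarith)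
  refine ⟨g p ^ (a + 1) / divisorSum g (p ^ a), div_mem (pow_mem hgK _) ?_, ?_, ?_⟩
  · rw [divisorSum_prime_pow g hp]
    exact sum_mem fun i _ ↦ pow_mem hgK i
  · rw [norm_div, norm_pow, div_le_iff₀ (by linarith)]
    nlinarith [pow_nonneg (norm_nonneg (g p)) (a + 1)]
  · rw [add_mul, div_mul_cancel₀ _ hne, one_mul, divisorSum_prime_pow g hp,
      divisorSum_prime_pow g hp, Finset.sum_range_succ _ (a + 1)]

theorem AbsorbsRatios.inter_smul_divisorSum_nonempty (hC : AbsorbsRatios K δ C) {p : ℕ}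
    (hp : p.Prime) (hgK : g p ∈ K) (hhalf : ‖g p‖ ≤ 1 / 2) {a : ℕ}
    (ha : 3 * ‖g p‖ ^ (a + 1) ≤ δ) :
    (divisorSum g (p ^ a) • C ∩ divisorSum g (p ^ (a + 1)) • C).Nonempty := by
  obtain ⟨w, hw, hwδ, hratio⟩ := exists_divisorSum_prime_pow_succ_eq hp hgK hhalf a
  obtain ⟨_, ⟨t, ht, rfl⟩, ht'⟩ := hC w hw (hwδ.trans ha)
  refine ⟨divisorSum g (p ^ (a + 1)) * t, ?_, smul_mem_smul_set ht⟩
  rw [hratio, mul_comm (1 + w), mul_assoc]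
  exact smul_mem_smul_set ht'

theorem eventually_dilate_subset_or_subset (hsum : Summable (‖g ·‖)) {E u v : Set 𝕜}
    (hE : IsCompact E) (hu : IsClosed u) (hv : IsClosed v) (hcover : E ⊆ u ∪ v)
    (huv : Disjoint u v) : ∀ᶠ M in Filter.atTop, ∀ c : 𝕜,
      c • roughClosure g M ⊆ E → c • roughClosure g M ⊆ u ∨ c • roughClosure g M ⊆ v := by
  obtain ⟨δ, hδ, hball⟩ : ∃ δ > 0, ∀ x ∈ E,
      Metric.ball x δ ∩ E ⊆ u ∨ Metric.ball x δ ∩ E ⊆ v := by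
    have hcompl : E ⊆ ⋃ b : Bool, cond b vᶜ uᶜ := by
      rw [← union_eq_iUnion, ← compl_inter, huv.symm.inter_eq, compl_empty]
      exact subset_univ E
    obtain ⟨δ, hδ, h⟩ := lebesgue_number_lemma_of_metric hE
      (Bool.forall_bool.2 ⟨hu.isOpen_compl, hv.isOpen_compl⟩) hcompl
    refine ⟨δ, hδ, fun x hx ↦ ?_⟩
    rcases h x hx with ⟨_ | _, hb⟩
    · exact Or.inr fun y hy ↦ (hcover hy.2).resolve_left (hb hy.1)
    · exact Or.inl fun y hy ↦ (hcover hy.2).resolve_right (hb hy.1)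
  obtain ⟨B, hB, hEB⟩ := hE.isBounded.subset_closedBall_lt 0 (0 : 𝕜)
  filter_upwards [eventually_roughClosure_subset_closedBall_one hsum
    (show 0 < δ / (2 * B) by positivity)] with M hM c hc
  have hcE : c ∈ E := hc (by simpa using smul_mem_smul_set (a := c) (one_mem_roughClosure g M))
  have hcball : c • roughClosure g M ⊆ Metric.ball c δ ∩ E := by
    refine subset_inter ?_ hc
    rintro _ ⟨t, ht, rfl⟩
    have hcB : ‖c‖ ≤ B := mem_closedBall_zero_iff.1 (hEB hcE)
    have ht₁ : ‖t - 1‖ ≤ δ / (2 * B) := mem_closedBall_iff_norm.1 (hM ht)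
    rw [mem_ball_iff_norm]
    calc ‖c * t - c‖ = ‖c‖ * ‖t - 1‖ := by rw [← norm_mul, mul_sub_one]
      _ ≤ B * (δ / (2 * B)) := by gcongr
      _ < δ := by field_simp; linarith
  exact (hball c hcE).imp hcball.trans hcball.trans

theorem AbsorbsRatios.dilate_subset_or_subset {p : ℕ} (hp : p.Prime)
    (habs : AbsorbsRatios K (3 * ‖g p‖) (roughClosure g (p + 1))) (hgK : g p ∈ K)
    (hhalf : ‖g p‖ ≤ 1 / 2) {E u v : Set 𝕜} (hu : IsClosed u) (hv : IsClosed v)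
    (huv : Disjoint u v)
    (hsucc : ∀ c : 𝕜, c • roughClosure g (p + 1) ⊆ E →
      c • roughClosure g (p + 1) ⊆ u ∨ c • roughClosure g (p + 1) ⊆ v)
    {c : 𝕜} (hc : c • roughClosure g p ⊆ E) :
    c • roughClosure g p ⊆ u ∨ c • roughClosure g p ⊆ v := by
  have hpiece (a : ℕ) : (c * divisorSum g (p ^ a)) • roughClosure g (p + 1) ⊆ E := by
    rw [mul_smul]
    exact (smul_set_mono (smul_roughClosure_subset g hp a)).trans hc
  have hchain (a : ℕ) : ((c * divisorSum g (p ^ a)) • roughClosure g (p + 1) ∩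
      (c * divisorSum g (p ^ (a + 1))) • roughClosure g (p + 1)).Nonempty := by
    obtain ⟨t, ht, ht'⟩ := habs.inter_smul_divisorSum_nonempty hp hgK hhalf (a := a) (by
      gcongr
      exact pow_le_of_le_one (norm_nonneg _) (hhalf.trans (by norm_num)) a.succ_ne_zero)
    rw [mul_smul, mul_smul]
    exact ⟨c * t, smul_mem_smul_set ht, smul_mem_smul_set ht'⟩
  rw [roughClosure_prime g hp, ← closure_smul₀, smul_set_iUnion]
  simp only [smul_smul]
  exact (iUnion_subset_or_subset_of_chain huv (fun a ↦ hsucc _ (hpiece a)) hchain).imp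
    (closure_minimal · hu) (closure_minimal · hv)

theorem isPreconnected_roughClosure [ProperSpace 𝕜] (hsum : Summable (‖g ·‖))
    (hgK : ∀ n, g n ∈ K) (hhalf : ∀ p, p.Prime → ‖g p‖ ≤ 1 / 2) {N : ℕ}
    (habs : ∀ M, N ≤ M → AbsorbsRatios K (3 * ‖g M‖) (roughClosure g (M + 1))) :
    IsPreconnected (roughClosure g N) := by
  rw [isPreconnected_iff_subset_of_fully_disjoint_closed (isClosed_roughClosure g N)]
  intro u v hu hv hcover huv
  obtain ⟨M₀, hM₀, hNM₀⟩ := ((eventually_dilate_subset_or_subset hsum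
    (isCompact_roughClosure hsum N) hu hv hcover huv).and (Filter.eventually_ge_atTop N)).exists
  have hdilate : ∀ c : 𝕜, c • roughClosure g N ⊆ roughClosure g N →
      c • roughClosure g N ⊆ u ∨ c • roughClosure g N ⊆ v := by
    refine Nat.decreasingInduction' (P := fun M ↦ ∀ c : 𝕜, c • roughClosure g M ⊆ roughClosure g N →
      c • roughClosure g M ⊆ u ∨ c • roughClosure g M ⊆ v) (fun M _ hNM ih c hc ↦ ?_) hNM₀ hM₀
    by_cases hM : M.Prime
    · exact (habs M hNM).dilate_subset_or_subset hM (hgK M) (hhalf M hM) hu hv huv ih hc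
    · rw [roughClosure_succ_of_not_prime g hM] at ih
      exact ih c hc
  simpa using hdilate 1 (by simp)

/-- `E` is a finite union of preconnected sets, each absorbing the ratios of `K` up to `δ`. Unlike
having finitely many components, this property passes from one `roughClosure` to the next. -/
def HasAbsorbingCover (K : Subfield 𝕜) (δ : ℝ) (E : Set 𝕜) : Prop :=
  ∃ 𝒞 : Set (Set 𝕜), 𝒞.Finite ∧ (∀ C ∈ 𝒞, IsPreconnected C ∧ AbsorbsRatios K δ C) ∧ ⋃₀ 𝒞 = E

theorem HasAbsorbingCover.finite_connectedComponents {E : Set 𝕜} (h : HasAbsorbingCover K δ E) :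
    Finite (ConnectedComponents E) := by
  obtain ⟨𝒞, hfin, h𝒞, rfl⟩ := h
  exact finite_connectedComponents_sUnion hfin fun C hC ↦ (h𝒞 C hC).1

theorem HasAbsorbingCover.biUnion {ι : Type*} {s : Set ι} (hs : s.Finite) {E : ι → Set 𝕜}
    (hE : ∀ i ∈ s, HasAbsorbingCover K δ (E i)) : HasAbsorbingCover K δ (⋃ i ∈ s, E i) := by
  choose! 𝒞 hfin h𝒞 hcover using hE
  refine ⟨⋃ i ∈ s, 𝒞 i, hs.biUnion hfin, fun C hC ↦ ?_, ?_⟩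
  · obtain ⟨i, hi, hC⟩ := mem_iUnion₂.1 hC
    exact h𝒞 i hi C hC
  · rw [sUnion_iUnion]
    simp only [sUnion_iUnion]
    exact iUnion₂_congr hcover

theorem AbsorbsRatios.hasAbsorbingCover_closure_iUnion_smul (hδ : 0 < δ)
    (hC : AbsorbsRatios K δ C) (hconn : IsPreconnected C) {p : ℕ} (hp : p.Prime) (hgK : g p ∈ K)
    (hhalf : ‖g p‖ ≤ 1 / 2) :
    HasAbsorbingCover K δ (closure (⋃ a, divisorSum g (p ^ a) • C)) := by
  obtain ⟨m, hm⟩ := exists_pow_lt_of_lt_one (show 0 < δ / 3 by positivity)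
    (show ‖g p‖ < 1 by linarith)
  have hchain (a : ℕ) (ha : m ≤ a) :
      (divisorSum g (p ^ a) • C ∩ divisorSum g (p ^ (a + 1)) • C).Nonempty := by
    refine hC.inter_smul_divisorSum_nonempty hp hgK hhalf ?_
    have := pow_le_pow_of_le_one (norm_nonneg (g p)) (by linarith) (show m ≤ a + 1 by omega)
    linarith
  have hpiece (a : ℕ) : IsPreconnected (divisorSum g (p ^ a) • C) :=
    hconn.image _ (continuous_const_smul _).continuousOn
  rw [← iUnion_closureBlock (fun a ↦ divisorSum g (p ^ a) • C) m]
  refine ⟨range fun i : Fin (m + 1) ↦ closureBlock (fun a ↦ divisorSum g (p ^ a) • C) m i,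
    finite_range _, forall_mem_range.2 fun i ↦ ⟨?_, ?_⟩, sUnion_range _⟩
  · exact isPreconnected_closureBlock hpiece hchain i
  · exact (hC.smul _).mono le_rfl
      (subset_closureBlock (fun a ↦ divisorSum g (p ^ a) • C) (Nat.lt_succ_iff.1 i.2))

theorem HasAbsorbingCover.of_succ (hδ : 0 < δ) (hgK : ∀ n, g n ∈ K)
    (hhalf : ∀ p, p.Prime → ‖g p‖ ≤ 1 / 2) {k : ℕ}
    (h : HasAbsorbingCover K δ (roughClosure g (k + 1))) :
    HasAbsorbingCover K δ (roughClosure g k) := by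
  by_cases hk : k.Prime
  · obtain ⟨𝒞, hfin, h𝒞, hcover⟩ := h
    have hsplit : roughClosure g k = ⋃ C ∈ 𝒞, closure (⋃ a, divisorSum g (k ^ a) • C) := by
      rw [roughClosure_prime g hk, ← hcover, ← hfin.closure_biUnion]
      simp only [sUnion_eq_biUnion, smul_set_iUnion]
      rw [iUnion_comm]
      exact congr_arg closure (iUnion_congr fun C ↦ iUnion_comm _)
    rw [hsplit]
    exact .biUnion hfin fun C hC ↦ (h𝒞 C hC).2.hasAbsorbingCover_closure_iUnion_smul hδ
      (h𝒞 C hC).1 hk (hgK k) (hhalf k hk)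
  · rwa [roughClosure_succ_of_not_prime g hk] at h

theorem finite_connectedComponents_roughClosure_zero (hδ : 0 < δ) (hgK : ∀ n, g n ∈ K)
    (hhalf : ∀ p, p.Prime → ‖g p‖ ≤ 1 / 2) {N : ℕ} (hconn : IsPreconnected (roughClosure g N))
    (habs : AbsorbsRatios K δ (roughClosure g N)) :
    Finite (ConnectedComponents (roughClosure g 0)) := by
  have hN : HasAbsorbingCover K δ (roughClosure g N) :=
    ⟨{roughClosure g N}, finite_singleton _, by simpa using ⟨hconn, habs⟩, sUnion_singleton _⟩
  exact (Nat.decreasingInduction' (P := fun k ↦ HasAbsorbingCover K δ (roughClosure g k))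
    (fun k _ _ ih ↦ ih.of_succ hδ hgK hhalf) N.zero_le hN).finite_connectedComponents

end Absorption

section Logarithms

open Filter Set
open scoped Pointwise

theorem exp_mem_roughClosure {g : ℕ →* ℂ} {k : ℕ} {P : Set ℕ} (hP : ∀ q ∈ P, q.Prime ∧ k ≤ q)
    (hne : ∀ q ∈ P, 1 + g q ≠ 0) {L : ℂ}
    (hL : L ∈ subsums (fun q ↦ Complex.log (1 + g q)) P) : Complex.exp L ∈ roughClosure g k := by
  classical
  obtain ⟨S, hSP, hS⟩ := hL
  refine mem_closure_of_tendsto ((Complex.continuous_exp.tendsto L).comp hS.tendsto_sum_nat)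
    (Eventually.of_forall fun X ↦ ?_)
  have hmem : ∀ q ∈ (Finset.range X).filter (· ∈ S), q ∈ P :=
    fun q hq ↦ hSP (Finset.mem_filter.1 hq).2
  refine ⟨∏ q ∈ (Finset.range X).filter (· ∈ S), q,
    prod_mem_roughNumbers fun q hq ↦ hP q (hmem q hq), ?_⟩
  simp only [Function.comp_apply, indicator_apply]
  rw [divisorSum_prod_primes g fun q hq ↦ (hP q (hmem q hq)).1, ← Finset.sum_filter,
    Complex.exp_sum]
  exact Finset.prod_congr rfl fun q hq ↦ (Complex.exp_log (hne q (hmem q hq))).symm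

theorem one_add_ne_zero_of_norm_lt_one {z : ℂ} (hz : ‖z‖ < 1) : 1 + z ≠ 0 :=
  Complex.slitPlane_ne_zero (Complex.mem_slitPlane_of_norm_lt_one hz)

theorem absorbsRatios_roughClosure_of_mem_sub {K : Subfield ℂ} {g : ℕ →* ℂ} {k : ℕ} {P : Set ℕ}
    {δ : ℝ} (hP : ∀ q ∈ P, q.Prime ∧ k ≤ q) (hne : ∀ q ∈ P, 1 + g q ≠ 0) (hδ : δ ≤ 1 / 2)
    (hlog : ∀ w ∈ K, ‖w‖ ≤ 1 / 2 → Complex.log (1 + w) ∈ K)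
    (hsub : ∀ z ∈ K, ‖z‖ ≤ 3 / 2 * δ → z ∈ subsums (fun q ↦ Complex.log (1 + g q)) P
      - subsums (fun q ↦ Complex.log (1 + g q)) P) :
    AbsorbsRatios K δ (roughClosure g k) := by
  intro w hw hwδ
  have hw₂ : ‖w‖ ≤ 1 / 2 := hwδ.trans hδ
  obtain ⟨L₁, hL₁, L₂, hL₂, hL⟩ := hsub (Complex.log (1 + w)) (hlog w hw hw₂)
    ((Complex.norm_log_one_add_half_le_self hw₂).trans (by gcongr))
  refine ⟨Complex.exp L₁, ⟨Complex.exp L₂, exp_mem_roughClosure hP hne hL₂, ?_⟩,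
    exp_mem_roughClosure hP hne hL₁⟩
  have hexp : Complex.exp (Complex.log (1 + w)) = 1 + w :=
    Complex.exp_log (one_add_ne_zero_of_norm_lt_one (hw₂.trans_lt (by norm_num)))
  simp only [smul_eq_mul]
  rw [← hexp, ← Complex.exp_add, ← hL, sub_add_cancel]

variable {f : ℕ → ℂ} {A A₁ A₂ : Set ℕ}

theorem ofReal_mem_subsums {b : ℕ → ℝ} (hf : ∀ q ∈ A, f q = b q) {x : ℝ} (hx : x ∈ subsums b A) :
    (x : ℂ) ∈ subsums f A := by
  obtain ⟨S, hSA, hS⟩ := hx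
  refine ⟨S, hSA, ?_⟩
  convert Complex.hasSum_ofReal.2 hS using 1
  ext q
  by_cases hq : q ∈ S <;> simp [hq, hf q (hSA _)]

theorem exists_mem_subsums_im_eq {c y : ℝ} (hf : ∀ q ∈ A, ‖f q‖ ≤ c * (f q).im)
    (hy : y ∈ subsums (fun q ↦ (f q).im) A) : ∃ u ∈ subsums f A, u.im = y ∧ ‖u‖ ≤ c * y := by
  obtain ⟨S, hSA, hS⟩ := hy
  have hbound (q : ℕ) : ‖S.indicator f q‖ ≤ c * S.indicator (fun q ↦ (f q).im) q := by
    by_cases hq : q ∈ S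
    · simpa [hq] using hf q (hSA hq)
    · simp [hq]
  have hsum := (Summable.of_norm_bounded (hS.mul_left c).summable hbound).hasSum
  refine ⟨_, ⟨S, hSA, hsum⟩, (Complex.imCLM.hasSum hsum).unique ?_,
    tsum_of_norm_bounded (hS.mul_left c) hbound⟩
  convert hS using 1
  ext q
  by_cases hq : q ∈ S <;> simp [hq]

theorem posPart_mem_Icc {x d : ℝ} (hx : |x| ≤ d) : x⁺ ∈ Icc 0 d :=
  ⟨posPart_nonneg x, by linarith [posPart_add_negPart x, negPart_nonneg x]⟩

theorem negPart_mem_Icc {x d : ℝ} (hx : |x| ≤ d) : x⁻ ∈ Icc 0 d :=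
  ⟨negPart_nonneg x, by linarith [posPart_add_negPart x, posPart_nonneg x]⟩

theorem HasHeavyTail.eventually_ofReal_mem_subsums_sub {r : ℝ} (hA : HasHeavyTail A r) (hr : 1 < r)
    {b : ℕ → ℝ} {c₁ c₂ : ℝ} (hc₁ : 0 < c₁) (hf : ∀ q ∈ A, f q = b q)
    (hb : ∀ᶠ q : ℕ in atTop, q ∈ A → b q ∈ Icc (c₁ * (q : ℝ) ^ (-r)) (c₂ * (q : ℝ) ^ (-r)))
    (D : ℝ) : ∀ᶠ N : ℕ in atTop, ∀ x : ℝ, |x| ≤ D * (N : ℝ) ^ (-r) →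
      (x : ℂ) ∈ subsums f (A ∩ Ioi N) - subsums f (A ∩ Ioi N) := by
  filter_upwards [hA.eventually_Icc_subset_subsums hr hc₁ hb D] with N hN x hx
  have hf' : ∀ q ∈ A ∩ Ioi N, f q = b q := fun q hq ↦ hf q hq.1
  refine ⟨_, ofReal_mem_subsums hf' (hN (posPart_mem_Icc hx)), _,
    ofReal_mem_subsums hf' (hN (negPart_mem_Icc hx)), ?_⟩
  exact (Complex.ofReal_sub _ _).symm.trans (congr_arg _ (posPart_sub_negPart x))

theorem HasHeavyTail.eventually_exists_im_eq {r : ℝ} (hA : HasHeavyTail A r) (hr : 1 < r)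
    {c c₁ c₂ : ℝ} (hc₁ : 0 < c₁) (hf : ∀ᶠ q : ℕ in atTop, q ∈ A → ‖f q‖ ≤ c * (f q).im ∧
      (f q).im ∈ Icc (c₁ * (q : ℝ) ^ (-r)) (c₂ * (q : ℝ) ^ (-r)))
    (D : ℝ) : ∀ᶠ N : ℕ in atTop, ∀ y : ℝ, |y| ≤ D * (N : ℝ) ^ (-r) →
      ∃ u ∈ subsums f (A ∩ Ioi N) - subsums f (A ∩ Ioi N), u.im = y ∧ ‖u‖ ≤ c * |y| := by
  filter_upwards [hA.eventually_Icc_subset_subsums hr hc₁ (hf.mono fun q h hq ↦ (h hq).2) D,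
    eventually_forall_ge_atTop.2 hf] with N hN hfN y hy
  have hnorm : ∀ q ∈ A ∩ Ioi N, ‖f q‖ ≤ c * (f q).im :=
    fun q hq ↦ (hfN q (le_of_lt hq.2) hq.1).1
  obtain ⟨u, hu, hu_im, hu_norm⟩ := exists_mem_subsums_im_eq hnorm (hN (posPart_mem_Icc hy))
  obtain ⟨v, hv, hv_im, hv_norm⟩ := exists_mem_subsums_im_eq hnorm (hN (negPart_mem_Icc hy))
  refine ⟨u - v, sub_mem_sub hu hv, ?_, ?_⟩
  · rw [Complex.sub_im, hu_im, hv_im, posPart_sub_negPart]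
  · rw [← posPart_add_negPart, mul_add]
    exact (norm_sub_le _ _).trans (add_le_add hu_norm hv_norm)

theorem eventually_complex_mem_subsums_sub {r : ℝ} (hA₁ : HasHeavyTail A₁ r)
    (hA₂ : HasHeavyTail A₂ r) (hdisj : Disjoint A₁ A₂) (hr : 1 < r) {b : ℕ → ℝ}
    {c c₁ c₂ c₃ c₄ : ℝ} (hc₁ : 0 < c₁) (hf₁ : ∀ q ∈ A₁, f q = b q)
    (hb : ∀ᶠ q : ℕ in atTop, q ∈ A₁ → b q ∈ Icc (c₁ * (q : ℝ) ^ (-r)) (c₂ * (q : ℝ) ^ (-r)))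
    (hc : 0 ≤ c) (hc₃ : 0 < c₃) (hf₂ : ∀ᶠ q : ℕ in atTop, q ∈ A₂ → ‖f q‖ ≤ c * (f q).im ∧
      (f q).im ∈ Icc (c₃ * (q : ℝ) ^ (-r)) (c₄ * (q : ℝ) ^ (-r)))
    (D : ℝ) : ∀ᶠ N : ℕ in atTop, ∀ z : ℂ, ‖z‖ ≤ D * (N : ℝ) ^ (-r) →
      z ∈ subsums f ((A₁ ∪ A₂) ∩ Ioi N) - subsums f ((A₁ ∪ A₂) ∩ Ioi N) := by
  filter_upwards [hA₁.eventually_ofReal_mem_subsums_sub hr hc₁ hf₁ hb (D + c * D),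
    hA₂.eventually_exists_im_eq hr hc₃ hf₂ D] with N hreal him z hz
  have hz_im : |z.im| ≤ D * (N : ℝ) ^ (-r) := (Complex.abs_im_le_norm z).trans hz
  obtain ⟨u, ⟨u₁, hu₁, u₂, hu₂, rfl⟩, hu_im, hu_norm⟩ := him z.im hz_im
  have hx : |(z - (u₁ - u₂)).re| ≤ (D + c * D) * (N : ℝ) ^ (-r) :=
    calc |(z - (u₁ - u₂)).re| ≤ ‖z - (u₁ - u₂)‖ := Complex.abs_re_le_norm _
      _ ≤ ‖z‖ + ‖u₁ - u₂‖ := norm_sub_le _ _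
      _ ≤ D * (N : ℝ) ^ (-r) + c * (D * (N : ℝ) ^ (-r)) :=
        add_le_add hz (hu_norm.trans (by gcongr))
      _ = (D + c * D) * (N : ℝ) ^ (-r) := by ring
  obtain ⟨x₁, hx₁, x₂, hx₂, hx⟩ := hreal _ hx
  have hdisj' : Disjoint (A₁ ∩ Ioi N) (A₂ ∩ Ioi N) :=
    hdisj.mono inter_subset_left inter_subset_left
  rw [union_inter_distrib_right]
  refine ⟨_, add_mem_subsums_union hdisj' hx₁ hu₁, _, add_mem_subsums_union hdisj' hx₂ hu₂, ?_⟩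
  have hreal_part : ((z - (u₁ - u₂)).re : ℂ) = z - (u₁ - u₂) :=
    Complex.ext rfl (by rw [Complex.sub_im, hu_im, sub_self, Complex.ofReal_im])
  rw [hreal_part] at hx
  linear_combination hx

end Logarithms

section Twists

open Filter Set
open scoped Pointwise

/-- The completely multiplicative function `n ↦ χ(n) n^{-r}`, whose divisor sums are the values of
`σ_{r,ℚ,χ}`. -/
noncomputable def twist {m : ℕ} (χ : DirichletCharacter ℂ m) (r : ℝ) : ℕ →* ℂ where
  toFun d := χ ((d : ℕ) : ZMod m) * (((d : ℝ) ^ (-r) : ℝ) : ℂ)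
  map_one' := by simp
  map_mul' a b := by
    rw [Nat.cast_mul, Nat.cast_mul, map_mul, Real.mul_rpow a.cast_nonneg b.cast_nonneg,
      Complex.ofReal_mul]
    ring

variable {m : ℕ} (χ : DirichletCharacter ℂ m) {r : ℝ}

theorem twist_apply (r : ℝ) (n : ℕ) :
    twist χ r n = χ (n : ZMod m) * (((n : ℝ) ^ (-r) : ℝ) : ℂ) := rfl

theorem norm_twist_le (r : ℝ) (n : ℕ) : ‖twist χ r n‖ ≤ (n : ℝ) ^ (-r) := by
  have hn : 0 ≤ (n : ℝ) ^ (-r) := by positivity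
  rw [twist_apply, norm_mul, Complex.norm_of_nonneg hn]
  exact mul_le_of_le_one_left hn (χ.norm_le_one _)

theorem summable_norm_twist (hr : 1 < r) : Summable (‖twist χ r ·‖) :=
  .of_nonneg_of_le (fun _ ↦ norm_nonneg _) (norm_twist_le χ r)
    (Real.summable_nat_rpow.2 (neg_lt_neg hr))

theorem rpow_neg_le_half {x : ℝ} (hr : 1 ≤ r) (hx : 2 ≤ x) : x ^ (-r) ≤ 1 / 2 := by
  calc x ^ (-r) ≤ x ^ (-1 : ℝ) := Real.rpow_le_rpow_of_exponent_le (by linarith) (by linarith)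
    _ = x⁻¹ := Real.rpow_neg_one x
    _ ≤ 1 / 2 := by rw [one_div]; gcongr

theorem norm_twist_le_half (hr : 1 ≤ r) {n : ℕ} (hn : 2 ≤ n) : ‖twist χ r n‖ ≤ 1 / 2 :=
  (norm_twist_le χ r n).trans (rpow_neg_le_half hr (by exact_mod_cast hn))

theorem eventually_const_mul_rpow_neg_le (hr : 0 < r) (C : ℝ) {ε : ℝ} (hε : 0 < ε) :
    ∀ᶠ n : ℕ in atTop, C * (n : ℝ) ^ (-r) ≤ ε := by
  have h := ((tendsto_rpow_neg_atTop hr).comp tendsto_natCast_atTop_atTop).const_mul C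
  rw [mul_zero] at h
  exact h.eventually_le_const hε

theorem log_one_add_mem_Icc {x : ℝ} (h₀ : 0 ≤ x) (h₁ : x ≤ 1) :
    Real.log (1 + x) ∈ Icc (1 / 2 * x) x := by
  constructor
  · refine le_trans ?_ (Real.le_log_one_add_of_nonneg h₀)
    rw [le_div_iff₀ (by linarith)]
    nlinarith
  · linarith [Real.log_le_sub_one_of_pos (x := 1 + x) (by linarith)]

theorem norm_log_one_add_sub_self_le_sq {z : ℂ} (hz : ‖z‖ ≤ 1 / 2) :
    ‖Complex.log (1 + z) - z‖ ≤ ‖z‖ ^ 2 := by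
  have hinv : (1 - ‖z‖)⁻¹ ≤ 2 := by
    rw [inv_le_comm₀ (by linarith) (by norm_num)]
    linarith
  nlinarith [Complex.norm_log_one_add_sub_self_le (z := z) (by linarith), sq_nonneg ‖z‖]

theorem log_one_add_mul_ofReal_estimate {ζ : ℂ} (hζ : ‖ζ‖ ≤ 1) (hζi : 0 < ζ.im) {x : ℝ}
    (h₀ : 0 ≤ x) (h₁ : x ≤ 1 / 2) (h₂ : x ≤ ζ.im / 2) :
    ‖Complex.log (1 + ζ * x)‖ ≤ 4 / ζ.im * (Complex.log (1 + ζ * x)).im ∧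
      (Complex.log (1 + ζ * x)).im ∈ Icc (ζ.im / 2 * x) (2 * x) := by
  have hz : ‖ζ * x‖ ≤ x := by
    rw [norm_mul, Complex.norm_of_nonneg h₀]
    exact mul_le_of_le_one_left h₀ hζ
  have herr : ‖Complex.log (1 + ζ * x) - ζ * x‖ ≤ x ^ 2 :=
    (norm_log_one_add_sub_self_le_sq (hz.trans h₁)).trans (by gcongr)
  have hnorm : ‖Complex.log (1 + ζ * x)‖ ≤ 2 * x := by
    nlinarith [norm_sub_norm_le (Complex.log (1 + ζ * x)) (ζ * x)]
  have him : ζ.im / 2 * x ≤ (Complex.log (1 + ζ * x)).im := by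
    have h := (abs_le.1 ((Complex.abs_im_le_norm _).trans herr)).1
    rw [Complex.sub_im, Complex.im_mul_ofReal] at h
    nlinarith
  refine ⟨hnorm.trans ?_, him, (Complex.im_le_norm _).trans hnorm⟩
  calc 2 * x = 4 / ζ.im * (ζ.im / 2 * x) := by field_simp; ring
    _ ≤ _ := by gcongr

theorem eventually_log_one_add_rpow_mem_Icc (hr : 0 < r) : ∀ᶠ q : ℕ in atTop,
    Real.log (1 + (q : ℝ) ^ (-r)) ∈ Icc (1 / 2 * (q : ℝ) ^ (-r)) (1 * (q : ℝ) ^ (-r)) := by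
  filter_upwards [eventually_const_mul_rpow_neg_le hr 1 one_pos] with q hq
  rw [one_mul] at hq ⊢
  exact log_one_add_mem_Icc (by positivity) hq

theorem log_one_add_twist_of_eq_one {q : ℕ} (hq : (q : ZMod m) = 1) :
    Complex.log (1 + twist χ r q) = Real.log (1 + (q : ℝ) ^ (-r)) := by
  rw [twist_apply, hq, map_one, one_mul, Complex.ofReal_log (by positivity), Complex.ofReal_add,
    Complex.ofReal_one]

theorem one_add_twist_ne_zero (hr : 1 ≤ r) {n : ℕ} (hn : 2 ≤ n) : 1 + twist χ r n ≠ 0 :=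
  one_add_ne_zero_of_norm_lt_one ((norm_twist_le_half χ hr hn).trans_lt (by norm_num))

theorem eventually_absorbsRatios_twist_of_mem_sub (hr : 1 < r) {K : Subfield ℂ} {P : Set ℕ}
    (hP : ∀ q ∈ P, q.Prime) (hlog : ∀ w ∈ K, ‖w‖ ≤ 1 / 2 → Complex.log (1 + w) ∈ K)
    (hsub : ∀ D : ℝ, ∀ᶠ N : ℕ in atTop, ∀ z ∈ K, ‖z‖ ≤ D * (N : ℝ) ^ (-r) →
      z ∈ subsums (fun q ↦ Complex.log (1 + twist χ r q)) (P ∩ Ioi N) -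
        subsums (fun q ↦ Complex.log (1 + twist χ r q)) (P ∩ Ioi N)) (C : ℝ) :
    ∀ᶠ N : ℕ in atTop, AbsorbsRatios K (C * (N : ℝ) ^ (-r)) (roughClosure (twist χ r) (N + 1)) := by
  filter_upwards [hsub (3 / 2 * C),
    eventually_const_mul_rpow_neg_le (one_pos.trans hr) C one_half_pos] with N hN hC
  refine absorbsRatios_roughClosure_of_mem_sub (fun q hq ↦ ⟨hP q hq.1, hq.2⟩)
    (fun q hq ↦ one_add_twist_ne_zero χ hr.le (hP q hq.1).two_le) hC hlog fun z hzK hz ↦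
    hN z hzK (by rwa [mul_assoc])

theorem eventually_absorbsRatios_twist_of_real [NeZero m] (hr : 1 < r) (C : ℝ) :
    ∀ᶠ N : ℕ in atTop, AbsorbsRatios Complex.ofRealHom.fieldRange (C * (N : ℝ) ^ (-r))
      (roughClosure (twist χ r) (N + 1)) := by
  refine eventually_absorbsRatios_twist_of_mem_sub χ hr
    (P := {p | p.Prime ∧ (p : ZMod m) = 1}) (fun q hq ↦ hq.1) ?_ (fun D ↦ ?_) C
  · rintro _ ⟨x, rfl⟩ hx
    rw [Complex.ofRealHom_eq_coe, Complex.norm_real] at hx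
    refine ⟨Real.log (1 + x), ?_⟩
    rw [Complex.ofRealHom_eq_coe, Complex.ofReal_log (by linarith [(abs_le.1 hx).1])]
    simp
  · have hA := hasHeavyTail_primes_residueClass (m := m) hr isUnit_one
    filter_upwards [hA.eventually_ofReal_mem_subsums_sub hr one_half_pos
      (fun q hq ↦ log_one_add_twist_of_eq_one χ hq.2)
      ((eventually_log_one_add_rpow_mem_Icc (one_pos.trans hr)).mono fun q h _ ↦ h) D] with N hN
    rintro _ ⟨x, rfl⟩ hx
    exact hN x (by simpa using hx)

theorem eventually_absorbsRatios_twist_of_im_pos [NeZero m] (hr : 1 < r) {b : ZMod m}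
    (hb : IsUnit b) (him : 0 < (χ b).im) (C : ℝ) :
    ∀ᶠ N : ℕ in atTop, AbsorbsRatios ⊤ (C * (N : ℝ) ^ (-r))
      (roughClosure (twist χ r) (N + 1)) := by
  have hdisj : Disjoint {p : ℕ | p.Prime ∧ (p : ZMod m) = 1}
      {p : ℕ | p.Prime ∧ (p : ZMod m) = b} := by
    refine disjoint_left.2 fun p h₁ h₂ ↦ him.ne ?_
    rw [← h₂.2, h₁.2, map_one, Complex.one_im]
  refine eventually_absorbsRatios_twist_of_mem_sub χ hr
    (P := {p | p.Prime ∧ (p : ZMod m) = 1} ∪ {p | p.Prime ∧ (p : ZMod m) = b})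
    (fun q hq ↦ hq.elim And.left And.left) (fun _ _ _ ↦ Subfield.mem_top _) (fun D ↦ ?_) C
  refine (eventually_complex_mem_subsums_sub (hasHeavyTail_primes_residueClass hr isUnit_one)
    (hasHeavyTail_primes_residueClass hr hb) hdisj hr one_half_pos
    (fun q hq ↦ log_one_add_twist_of_eq_one χ hq.2)
    ((eventually_log_one_add_rpow_mem_Icc (one_pos.trans hr)).mono fun q h _ ↦ h)
    (c := 4 / (χ b).im) (c₃ := (χ b).im / 2) (c₄ := 2) (by positivity) (by positivity) ?_ D).mono
    fun N hN z _ ↦ hN z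
  filter_upwards [eventually_const_mul_rpow_neg_le (one_pos.trans hr) 1 one_half_pos,
    eventually_const_mul_rpow_neg_le (one_pos.trans hr) 1 (half_pos him)] with q h₁ h₂ hq
  rw [one_mul] at h₁ h₂
  rw [twist_apply, hq.2]
  exact log_one_add_mul_ofReal_estimate (χ.norm_le_one b) him (by positivity) h₁ h₂

theorem exists_isUnit_im_pos_of_im_ne_zero {a : ZMod m} (ha : (χ a).im ≠ 0) :
    ∃ b, IsUnit b ∧ 0 < (χ b).im := by
  have hu : IsUnit a := by
    by_contra hu
    simp [χ.map_nonunit hu] at ha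
  rcases ha.lt_or_gt with hneg | hpos
  · refine ⟨Ring.inverse a, hu.ringInverse, ?_⟩
    rw [← MulChar.inv_apply, MulChar.inv_apply_eq_inv', Complex.inv_im]
    exact div_pos (neg_pos.2 hneg) (Complex.normSq_pos.2 fun h ↦ ha (by rw [h, Complex.zero_im]))
  · exact ⟨a, hu, hpos⟩

theorem exists_subfield_eventually_absorbsRatios_twist [NeZero m] (hr : 1 < r) (C : ℝ) :
    ∃ K : Subfield ℂ, (∀ n, twist χ r n ∈ K) ∧ ∀ᶠ N : ℕ in atTop,
      AbsorbsRatios K (C * (N : ℝ) ^ (-r)) (roughClosure (twist χ r) (N + 1)) := by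
  by_cases hχ : ∃ a, (χ a).im ≠ 0
  · obtain ⟨a, ha⟩ := hχ
    obtain ⟨b, hb, him⟩ := exists_isUnit_im_pos_of_im_ne_zero χ ha
    exact ⟨⊤, fun _ ↦ Subfield.mem_top _, eventually_absorbsRatios_twist_of_im_pos χ hr hb him C⟩
  · push Not at hχ
    refine ⟨Complex.ofRealHom.fieldRange, fun n ↦ RingHom.mem_fieldRange.2 ⟨(twist χ r n).re, ?_⟩,
      eventually_absorbsRatios_twist_of_real χ hr C⟩
    have him : (twist χ r n).im = 0 := by rw [twist_apply, Complex.im_mul_ofReal, hχ, zero_mul]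
    exact Complex.ext rfl him.symm

theorem finite_connectedComponents_roughClosure_twist [NeZero m] (hr : 1 < r) :
    Finite (ConnectedComponents (roughClosure (twist χ r) 0)) := by
  obtain ⟨K, hK, habs⟩ := exists_subfield_eventually_absorbsRatios_twist χ hr 3
  obtain ⟨N, hN⟩ := eventually_atTop.1 habs
  have hhalf : ∀ p : ℕ, p.Prime → ‖twist χ r p‖ ≤ 1 / 2 :=
    fun p hp ↦ norm_twist_le_half χ hr.le hp.two_le
  have hconn : ∀ k, N ≤ k → IsPreconnected (roughClosure (twist χ r) k) := fun k hk ↦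
    isPreconnected_roughClosure (summable_norm_twist χ hr) hK hhalf fun M hM ↦
      (hN M (hk.trans hM)).mono (by gcongr; exact norm_twist_le χ r M) subset_rfl
  exact finite_connectedComponents_roughClosure_zero (N := max N 1 + 1) (by positivity) hK hhalf
    (hconn _ (by omega)) (hN (max N 1) (le_max_left _ _))

end Twists

section RoughSup

open Filter Set Topology

/-- The completely multiplicative function `n ↦ n^{-r}`, whose divisor sums are the values of the
untwisted `σ_{-r}`. -/
noncomputable def natRpowNeg (r : ℝ) : ℕ →* ℝ where
  toFun n := (n : ℝ) ^ (-r)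
  map_one' := by simp
  map_mul' a b := by rw [Nat.cast_mul, Real.mul_rpow a.cast_nonneg b.cast_nonneg]

/-- The supremum of `σ_{-r}` over the `k`-rough numbers, which is the tail
`∏ p ≥ k, (1 - p^{-r})⁻¹` of the Euler product. -/
noncomputable def roughSup (r : ℝ) (k : ℕ) : ℝ := sSup (divisorSum (natRpowNeg r) '' roughNumbers k)

variable {r : ℝ} {k n : ℕ}

theorem natRpowNeg_apply (r : ℝ) (n : ℕ) : natRpowNeg r n = (n : ℝ) ^ (-r) := rfl

theorem natRpowNeg_nonneg (r : ℝ) (n : ℕ) : 0 ≤ natRpowNeg r n := by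
  rw [natRpowNeg_apply]
  positivity

theorem norm_natRpowNeg (r : ℝ) (n : ℕ) : ‖natRpowNeg r n‖ = (n : ℝ) ^ (-r) :=
  Real.norm_of_nonneg (natRpowNeg_nonneg r n)

theorem summable_norm_natRpowNeg (hr : 1 < r) : Summable (‖natRpowNeg r ·‖) := by
  simpa only [norm_natRpowNeg] using Real.summable_nat_rpow.2 (neg_lt_neg hr)

theorem one_le_divisorSum_natRpowNeg (r : ℝ) (hn : 0 < n) : 1 ≤ divisorSum (natRpowNeg r) n :=
  (map_one (natRpowNeg r)).ge.trans (Finset.single_le_sum (fun d _ ↦ natRpowNeg_nonneg r d)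
    (Nat.one_mem_divisors.2 hn.ne'))

theorem divisorSum_le_roughSup (hr : 1 < r) (hn : n ∈ roughNumbers k) :
    divisorSum (natRpowNeg r) n ≤ roughSup r k := by
  refine le_csSup ⟨∑' d, ‖natRpowNeg r d‖, ?_⟩ ⟨n, hn, rfl⟩
  rintro _ ⟨d, -, rfl⟩
  exact (Real.le_norm_self _).trans (norm_divisorSum_le (summable_norm_natRpowNeg hr) d)

theorem roughSup_le {y : ℝ} (h : ∀ n ∈ roughNumbers k, divisorSum (natRpowNeg r) n ≤ y) :
    roughSup r k ≤ y :=
  csSup_le ⟨_, 1, one_mem_roughNumbers k, rfl⟩ (forall_mem_image.2 h)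

theorem roughClosure_natRpowNeg_subset_Icc (hr : 1 < r) (k : ℕ) :
    roughClosure (natRpowNeg r) k ⊆ Icc 1 (roughSup r k) :=
  closure_minimal (image_subset_iff.2 fun _ hn ↦
    ⟨one_le_divisorSum_natRpowNeg r hn.1, divisorSum_le_roughSup hr hn⟩) isClosed_Icc

theorem roughSup_mem_roughClosure (hr : 1 < r) (k : ℕ) :
    roughSup r k ∈ roughClosure (natRpowNeg r) k :=
  csSup_mem_closure ⟨_, 1, one_mem_roughNumbers k, rfl⟩
    ⟨roughSup r k, forall_mem_image.2 fun _ hn ↦ divisorSum_le_roughSup hr hn⟩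

theorem one_le_roughSup (hr : 1 < r) (k : ℕ) : 1 ≤ roughSup r k :=
  (roughClosure_natRpowNeg_subset_Icc hr k (one_mem_roughClosure _ k)).2

theorem tendsto_roughSup (hr : 1 < r) : Tendsto (roughSup r) atTop (𝓝 1) := by
  refine Metric.tendsto_nhds.2 fun ε hε ↦ ?_
  filter_upwards [eventually_roughClosure_subset_closedBall_one (summable_norm_natRpowNeg hr)
    (half_pos hε)] with k hk
  exact (hk (roughSup_mem_roughClosure hr k)).trans_lt (half_lt_self hε)

theorem one_sub_mul_roughSup_le (hr : 1 < r) (hk : 1 ≤ k) :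
    (1 - (k : ℝ) ^ (-r)) * roughSup r k ≤ roughSup r (k + 1) := by
  have hZ := one_le_roughSup hr
  by_cases hp : k.Prime
  · have hx : 0 < 1 - (k : ℝ) ^ (-r) := by
      linarith [rpow_neg_le_half hr.le (x := k) (by exact_mod_cast hp.two_le)]
    rw [← le_div_iff₀' hx]
    refine roughSup_le fun n hn ↦ (le_div_iff₀' hx).2 ?_
    obtain ⟨a, b, hb, rfl⟩ := (mem_roughNumbers_prime_iff hp).1 hn
    rw [divisorSum_mul_of_coprime _ ((coprime_of_mem_roughNumbers_succ hp hb).pow_left a),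
      ← mul_assoc]
    have hgeom : (1 - (k : ℝ) ^ (-r)) * divisorSum (natRpowNeg r) (k ^ a) ≤ 1 := by
      rw [divisorSum_prime_pow _ hp, natRpowNeg_apply, mul_neg_geom_sum]
      exact sub_le_self _ (by positivity)
    calc _ ≤ 1 * divisorSum (natRpowNeg r) b := by
          gcongr
          exact zero_le_one.trans (one_le_divisorSum_natRpowNeg r hb.1)
      _ ≤ roughSup r (k + 1) := (one_mul _).trans_le (divisorSum_le_roughSup hr hb)
  · rw [roughSup, roughSup, roughNumbers_succ_of_not_prime hp]
    exact mul_le_of_le_one_left (zero_le_one.trans (hZ k)) (sub_le_self _ (by positivity))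

theorem one_add_le_roughSup {δ : ℝ} (hr : 1 < r) (hδ : 0 ≤ δ)
    (habs : AbsorbsRatios ⊤ δ (roughClosure (natRpowNeg r) k)) : 1 + δ ≤ roughSup r k := by
  obtain ⟨_, ⟨t, ht, rfl⟩, ht'⟩ := habs δ (Subfield.mem_top δ) (Real.norm_of_nonneg hδ).le
  calc 1 + δ ≤ (1 + δ) * t := le_mul_of_one_le_right (by linarith)
        (roughClosure_natRpowNeg_subset_Icc hr k ht).1
    _ ≤ roughSup r k := (roughClosure_natRpowNeg_subset_Icc hr k ht').2

theorem roughClosure_natRpowNeg_eq_Icc (hr : 1 < r)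
    (hconn : IsPreconnected (roughClosure (natRpowNeg r) k)) :
    roughClosure (natRpowNeg r) k = Icc 1 (roughSup r k) :=
  (roughClosure_natRpowNeg_subset_Icc hr k).antisymm
    (hconn.Icc_subset (one_mem_roughClosure _ k) (roughSup_mem_roughClosure hr k))

theorem roughClosure_eq_ofReal_image {g : ℕ →* ℂ} {h : ℕ →* ℝ}
    (hgh : ∀ n ∈ roughNumbers k, g n = h n) :
    roughClosure g k = Complex.ofReal '' roughClosure h k := by
  rw [roughClosure, roughClosure,
    ← Complex.isUniformEmbedding_ofReal.isClosedEmbedding.closure_image_eq, image_image]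
  refine congr_arg closure (image_congr fun n hn ↦ ?_)
  rw [divisorSum, divisorSum, Complex.ofReal_sum]
  exact Finset.sum_congr rfl fun d hd ↦
    hgh d (mem_roughNumbers_of_dvd hn (Nat.dvd_of_mem_divisors hd))

theorem AbsorbsRatios.of_ofReal_image {δ : ℝ} {S : Set ℝ}
    (h : AbsorbsRatios Complex.ofRealHom.fieldRange δ (Complex.ofReal '' S)) :
    AbsorbsRatios ⊤ δ S := by
  intro w _ hw
  obtain ⟨_, ⟨_, ⟨s, hs, rfl⟩, hst⟩, t, ht, rfl⟩ :=
    h w (RingHom.mem_fieldRange.2 ⟨w, rfl⟩) (by rwa [Complex.norm_real])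
  refine ⟨t, ⟨s, hs, ?_⟩, ht⟩
  simp only [smul_eq_mul] at hst ⊢
  exact_mod_cast hst

theorem twist_one_of_coprime {M : ℕ} (r : ℝ) (h : n.Coprime M) :
    twist (1 : DirichletCharacter ℂ M) r n = natRpowNeg r n := by
  rw [twist_apply, MulChar.one_apply ((ZMod.isUnit_iff_coprime n M).2 h), one_mul, natRpowNeg_apply]

theorem twist_one_of_not_coprime {M : ℕ} (r : ℝ) (h : ¬ n.Coprime M) :
    twist (1 : DirichletCharacter ℂ M) r n = 0 := by
  rw [twist_apply, MulChar.map_nonunit _ (mt (ZMod.isUnit_iff_coprime n M).1 h), zero_mul]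

theorem eventually_absorbsRatios_natRpowNeg (hr : 1 < r) (C : ℝ) : ∀ᶠ N : ℕ in atTop,
    AbsorbsRatios ⊤ (C * (N : ℝ) ^ (-r)) (roughClosure (natRpowNeg r) (N + 1)) := by
  filter_upwards [eventually_absorbsRatios_twist_of_real (1 : DirichletCharacter ℂ 1) hr C]
    with N hN
  rw [roughClosure_eq_ofReal_image fun n _ ↦ twist_one_of_coprime r (Nat.coprime_one_right n)] at hN
  exact hN.of_ofReal_image

theorem eventually_roughClosure_natRpowNeg_eq_Icc (hr : 1 < r) :
    ∀ᶠ N : ℕ in atTop, roughClosure (natRpowNeg r) N = Icc 1 (roughSup r N) := by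
  filter_upwards [eventually_forall_ge_atTop.2 (eventually_absorbsRatios_natRpowNeg hr 3)] with N hN
  refine roughClosure_natRpowNeg_eq_Icc hr (isPreconnected_roughClosure
    (summable_norm_natRpowNeg hr) (fun _ ↦ Subfield.mem_top _) (fun p hp ↦ ?_) fun M hM ↦ ?_)
  · rw [norm_natRpowNeg]
    exact rpow_neg_le_half hr.le (by exact_mod_cast hp.two_le)
  · rw [norm_natRpowNeg]
    exact hN M hM

end RoughSup

section Counting

open Filter Set Topology
open scoped Pointwise

theorem card_connectedComponents_image {X Y : Type*} [TopologicalSpace X] [TopologicalSpace Y]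
    {f : X → Y} (hf : IsEmbedding f) (S : Set X) :
    Nat.card (ConnectedComponents (f '' S)) = Nat.card (ConnectedComponents S) := by
  let e : S ≃ₜ f '' S := hf.homeomorphImage S
  refine (Nat.card_congr
    (e.isQuotientMap.isCoinducing.connectedComponentsHomeomorph fun y ↦ ?_)).symm
  rw [← e.image_symm, image_singleton]
  exact isConnected_singleton

theorem card_connectedComponents_closure_iUnion_Icc {a b : ℕ → ℝ} {m : ℕ} (ha : Monotone a)
    (hab : ∀ k, a k ≤ b k) (hlt : ∀ k < m, b k < a (k + 1)) (hle : ∀ k, m ≤ k → a (k + 1) ≤ b k) :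
    Nat.card (ConnectedComponents (closure (⋃ k, Icc (a k) (b k)))) = m + 1 := by
  set L : ℕ → Set ℝ := closureBlock (fun k ↦ Icc (a k) (b k)) m
  have hlower (i : ℕ) : L i ⊆ Ici (a i) := closureBlock_subset isClosed_Ici fun k hk ↦
    Icc_subset_Ici_self.trans (Ici_subset_Ici.2 (ha (hk ▸ min_le_left k m)))
  have hupper (i : ℕ) (hi : i < m) : L i ⊆ Iic (b i) :=
    closureBlock_subset isClosed_Iic fun k hk ↦ by
      obtain rfl : k = i := by omega
      exact Icc_subset_Iic_self
  rw [← iUnion_closureBlock _ m,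
    card_connectedComponents_iUnion (K := fun i : Fin (m + 1) ↦ L i) (fun i ↦ isClosed_closure),
    Nat.card_fin]
  · refine (pairwise_disjoint_on _).2 fun i j hij ↦ disjoint_left.2 fun x hxi hxj ↦ ?_
    have him : (i : ℕ) < m := by omega
    exact ((hlower j hxj).trans (hupper i him hxi)).not_gt
      ((hlt i him).trans_le (ha (Nat.succ_le_of_lt hij)))
  · refine fun i ↦ ⟨(nonempty_Icc.2 (hab i)).mono (subset_closureBlock _ (by omega)),
      isPreconnected_closureBlock (fun k ↦ isPreconnected_Icc) (fun k hk ↦ ?_) i⟩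
    exact ⟨a (k + 1), ⟨ha k.le_succ, hle k hk⟩, le_rfl, hab (k + 1)⟩

/-- The geometric sum `1 + x + ⋯ + x^k`, which is `σ_{-r}(p^k)` for `x = p^{-r}`. -/
def geomSum (x : ℝ) (k : ℕ) : ℝ := ∑ i ∈ Finset.range (k + 1), x ^ i

/-- The relative gap `(geomSum x (k + 1) - geomSum x k) / geomSum x k`: for `Z ≥ 1`, the intervals
`[geomSum x k, geomSum x k * Z]` and `[geomSum x (k + 1), geomSum x (k + 1) * Z]` are disjoint
exactly when `Z < 1 + relGap x k`. -/
noncomputable def relGap (x : ℝ) (k : ℕ) : ℝ := x ^ (k + 1) / geomSum x k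

variable {x : ℝ}

theorem geomSum_succ (x : ℝ) (k : ℕ) : geomSum x (k + 1) = geomSum x k + x ^ (k + 1) :=
  Finset.sum_range_succ _ _

theorem monotone_geomSum (hx : 0 ≤ x) : Monotone (geomSum x) :=
  monotone_nat_of_le_succ fun k ↦ by
    rw [geomSum_succ]
    exact le_add_of_nonneg_right (by positivity)

theorem one_le_geomSum (hx : 0 ≤ x) (k : ℕ) : 1 ≤ geomSum x k :=
  (by simp [geomSum] : (1 : ℝ) = geomSum x 0).trans_le (monotone_geomSum hx k.zero_le)

theorem geomSum_pos (hx : 0 ≤ x) (k : ℕ) : 0 < geomSum x k := one_pos.trans_le (one_le_geomSum hx k)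

theorem geomSum_mul_one_add_relGap (hx : 0 ≤ x) (k : ℕ) :
    geomSum x k * (1 + relGap x k) = geomSum x (k + 1) := by
  rw [relGap, mul_add, mul_one, mul_div_cancel₀ _ (geomSum_pos hx k).ne', geomSum_succ]

theorem relGap_pos (hx : 0 < x) (k : ℕ) : 0 < relGap x k :=
  div_pos (by positivity) (geomSum_pos hx.le k)

theorem relGap_zero (x : ℝ) : relGap x 0 = x := by simp [relGap, geomSum]

theorem relGap_succ_le_half (hx : 0 ≤ x) (hx' : x ≤ 1 / 2) (k : ℕ) :
    relGap x (k + 1) ≤ relGap x k / 2 := by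
  have hpos := geomSum_pos hx k
  calc relGap x (k + 1) ≤ x ^ (k + 1) * (1 / 2) / geomSum x k := by
        rw [relGap, pow_succ _ (k + 1)]
        gcongr
        exact monotone_geomSum hx k.le_succ
    _ = relGap x k / 2 := by rw [relGap]; ring

theorem antitone_relGap (hx : 0 < x) (hx' : x ≤ 1 / 2) : Antitone (relGap x) :=
  antitone_nat_of_succ_le fun k ↦
    (relGap_succ_le_half hx.le hx' k).trans (half_le_self (relGap_pos hx k).le)

theorem card_connectedComponents_closure_iUnion_smul_Icc {Z : ℝ} {m : ℕ} (hx : 0 ≤ x) (hZ : 1 ≤ Z)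
    (hlt : ∀ k < m, Z < 1 + relGap x k) (hle : ∀ k, m ≤ k → 1 + relGap x k ≤ Z) :
    Nat.card (ConnectedComponents (closure (⋃ k, geomSum x k • Icc 1 Z))) = m + 1 := by
  have hsmul (k : ℕ) : geomSum x k • Icc 1 Z = Icc (geomSum x k) (geomSum x k * Z) := by
    rw [LinearOrderedField.smul_Icc (geomSum_pos hx k), mul_one]
  rw [iUnion_congr hsmul]
  refine card_connectedComponents_closure_iUnion_Icc (monotone_geomSum hx)
    (fun k ↦ le_mul_of_one_le_right (geomSum_pos hx k).le hZ) (fun k hk ↦ ?_) fun k hk ↦ ?_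
  · rw [← geomSum_mul_one_add_relGap hx]
    exact mul_lt_mul_of_pos_left (hlt k hk) (geomSum_pos hx k)
  · rw [← geomSum_mul_one_add_relGap hx]
    exact mul_le_mul_of_nonneg_left (hle k hk) (geomSum_pos hx k).le

variable {r : ℝ}

theorem exists_roughSup_mem_Ico (hr : 1 < r) {p : ℕ} (hp : 1 ≤ p)
    (hbig : ∀ N, p ≤ N → 1 + 3 * (N : ℝ) ^ (-r) ≤ roughSup r (N + 1)) {β : ℝ} (hβ₀ : 0 < β)
    (hβ₁ : β ≤ 1) (hβ : 1 + β ≤ roughSup r (p + 1)) :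
    ∃ N, p ≤ N ∧ roughSup r (N + 1) ∈ Ico (1 + β / 2) (1 + β) := by
  have hex : ∃ n, ¬ 1 + β ≤ roughSup r (p + n + 1) := by
    have hlim := (tendsto_add_atTop_iff_nat (p + 1)).2 (tendsto_roughSup hr)
    obtain ⟨n, hn⟩ := (hlim.eventually_lt_const (lt_add_of_pos_right 1 hβ₀)).exists
    exact ⟨n, not_le.2 (by rwa [show p + n + 1 = n + (p + 1) by omega])⟩
  obtain ⟨n, hn, hn'⟩ := Nat.exists_not_and_succ_of_not_zero_of_exists
    (p := fun n ↦ ¬ 1 + β ≤ roughSup r (p + n + 1)) (not_not.2 hβ) hex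
  rw [not_not] at hn
  refine ⟨p + (n + 1), by omega, ?_, not_le.1 hn'⟩
  have hdrop := one_sub_mul_roughSup_le hr (k := p + (n + 1)) (by omega)
  have hfloor := hbig (p + (n + 1)) (by omega)
  set y : ℝ := ((p + (n + 1) : ℕ) : ℝ) ^ (-r)
  rcases le_total (β / 6) y with hy | hy
  · linarith
  · refine le_trans ?_ hdrop
    rw [← add_assoc]
    nlinarith

theorem exists_relGap_cut (hr : 1 < r) {p : ℕ} (hp : 2 ≤ p)
    (hbig : ∀ N, p ≤ N → 1 + 3 * (N : ℝ) ^ (-r) ≤ roughSup r (N + 1)) (m : ℕ) :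
    ∃ N, p ≤ N ∧ (∀ k < m, roughSup r (N + 1) < 1 + relGap ((p : ℝ) ^ (-r)) k) ∧
      ∀ k, m ≤ k → 1 + relGap ((p : ℝ) ^ (-r)) k ≤ roughSup r (N + 1) := by
  set x : ℝ := (p : ℝ) ^ (-r)
  have hx : 0 < x := Real.rpow_pos_of_pos (by exact_mod_cast (by omega : 0 < p)) _
  have hx' : x ≤ 1 / 2 := rpow_neg_le_half hr.le (by exact_mod_cast hp)
  have hanti := antitone_relGap hx hx'
  have hgap (k : ℕ) : relGap x k ≤ x := (hanti k.zero_le).trans_eq (relGap_zero x)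
  have hxZ : 1 + x ≤ roughSup r (p + 1) := by linarith [hbig p le_rfl]
  cases m with
  | zero => exact ⟨p, le_rfl, by simp, fun k _ ↦ by linarith [hgap k]⟩
  | succ m =>
    obtain ⟨N, hpN, hlo, hhi⟩ := exists_roughSup_mem_Ico hr (by omega) hbig (relGap_pos hx m)
      (by linarith [hgap m]) (by linarith [hgap m])
    refine ⟨N, hpN, fun k hk ↦ ?_, fun k hk ↦ ?_⟩
    · linarith [hanti (Nat.le_of_lt_succ hk)]
    · linarith [hanti hk, relGap_succ_le_half hx.le hx' m]

theorem exists_pos_prime_dvd_iff (N p₀ : ℕ) :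
    ∃ M, 0 < M ∧ ∀ p : ℕ, p.Prime → (p ∣ M ↔ p ≤ N ∧ p ≠ p₀) := by
  have hmem {q : ℕ} : q ∈ N.primesLE.erase p₀ ↔ q ≠ p₀ ∧ q ≤ N ∧ q.Prime := by
    rw [Finset.mem_erase, Nat.mem_primesLE]
  refine ⟨∏ q ∈ N.primesLE.erase p₀, q, Finset.prod_pos fun q hq ↦ (hmem.1 hq).2.2.pos,
    fun p hp ↦ ⟨fun h ↦ ?_, fun h ↦ Finset.dvd_prod_of_mem _ (hmem.2 ⟨h.2, h.1, hp⟩)⟩⟩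
  obtain ⟨q, hq, hpq⟩ := (hp.prime.dvd_finsetProd_iff _).1 h
  obtain ⟨hne, hle, hqp⟩ := hmem.1 hq
  rw [(Nat.prime_dvd_prime_iff_eq hp hqp).1 hpq]
  exact ⟨hle, hne⟩

theorem roughClosure_twist_one_zero {M N p₀ : ℕ} (r : ℝ) (hp₀ : p₀.Prime) (hN : p₀ ≤ N)
    (hM : ∀ p : ℕ, p.Prime → (p ∣ M ↔ p ≤ N ∧ p ≠ p₀)) :
    roughClosure (twist (1 : DirichletCharacter ℂ M) r) 0 = Complex.ofReal ''
      closure (⋃ a, geomSum ((p₀ : ℝ) ^ (-r)) a • roughClosure (natRpowNeg r) (N + 1)) := by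
  set g := twist (1 : DirichletCharacter ℂ M) r
  have hg (p : ℕ) (hp : p.Prime) (hpN : p ≤ N) (hne : p ≠ p₀) : g p = 0 :=
    twist_one_of_not_coprime r ((Nat.Prime.dvd_iff_not_coprime hp).1 ((hM p hp).2 ⟨hpN, hne⟩))
  have hlow : roughClosure g p₀ = roughClosure g 0 :=
    roughClosure_eq_of_forall_eq_zero p₀.zero_le fun p hp _ hlt ↦ hg p hp (by omega) hlt.ne
  have hhigh : roughClosure g (N + 1) = roughClosure g (p₀ + 1) :=
    roughClosure_eq_of_forall_eq_zero (by omega) fun p hp hgt hlt ↦ hg p hp (by omega) (by omega)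
  have hrough : roughClosure g (N + 1) = Complex.ofReal '' roughClosure (natRpowNeg r) (N + 1) :=
    roughClosure_eq_ofReal_image fun n hn ↦ twist_one_of_coprime r <|
      Nat.coprime_of_dvd fun p hp hpn hpM ↦ by
        have := hn.2 p hp hpn
        have := ((hM p hp).1 hpM).1
        omega
  have hpow (a : ℕ) : divisorSum g (p₀ ^ a) = geomSum ((p₀ : ℝ) ^ (-r)) a := by
    have hcop : p₀.Coprime M := hp₀.coprime_iff_not_dvd.2 fun h ↦ ((hM p₀ hp₀).1 h).2 rfl
    rw [divisorSum_prime_pow _ hp₀, twist_one_of_coprime r hcop, natRpowNeg_apply, geomSum]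
    push_cast
    rfl
  have hsmul (a : ℕ) (S : Set ℝ) : Complex.ofReal '' (geomSum ((p₀ : ℝ) ^ (-r)) a • S) =
      divisorSum g (p₀ ^ a) • Complex.ofReal '' S := by
    rw [hpow]
    exact image_smul_comm _ _ _ fun t ↦ Complex.ofReal_mul _ _
  rw [← Complex.isUniformEmbedding_ofReal.isClosedEmbedding.closure_image_eq, image_iUnion, ← hlow,
    roughClosure_prime g hp₀, ← hhigh, hrough]
  simp only [hsmul]

theorem exists_card_connectedComponents_roughClosure_twist_one (hr : 1 < r) (m : ℕ) :
    ∃ M, 0 < M ∧ Nat.card (ConnectedComponents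
      (roughClosure (twist (1 : DirichletCharacter ℂ M) r) 0)) = m + 1 := by
  obtain ⟨N₀, hN₀⟩ := eventually_atTop.1 ((eventually_roughClosure_natRpowNeg_eq_Icc hr).and
    (eventually_absorbsRatios_natRpowNeg hr 3))
  obtain ⟨p₀, hle, hp₀⟩ := Nat.exists_infinite_primes N₀
  obtain ⟨N, hN, hlt, hge⟩ := exists_relGap_cut hr hp₀.two_le
    (fun N hN ↦ one_add_le_roughSup hr (by positivity) (hN₀ N (hle.trans hN)).2) m
  obtain ⟨M, hM, hdvd⟩ := exists_pos_prime_dvd_iff N p₀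
  refine ⟨M, hM, ?_⟩
  rw [roughClosure_twist_one_zero r hp₀ hN hdvd, (hN₀ (N + 1) (by omega)).1,
    card_connectedComponents_image Complex.isUniformEmbedding_ofReal.isEmbedding]
  exact card_connectedComponents_closure_iUnion_smul_Icc (by positivity) (one_le_roughSup hr _)
    hlt hge

end Counting

theorem closure_sigmaQ_image {m : ℕ} (χ : DirichletCharacter ℂ m) (r : ℝ) :
    closure (sigmaQ χ r '' {k : ℕ | 0 < k}) = roughClosure (twist χ r) 0 := by
  rw [roughClosure, roughNumbers_zero]
  rfl

theorem card_connectedComponents_closure_sigmaQ_pos {m : ℕ} (hm : 0 < m)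
    (χ : DirichletCharacter ℂ m) {r : ℝ} (hr : 1 < r) :
    0 < Nat.card (ConnectedComponents (closure (sigmaQ χ r '' {k : ℕ | 0 < k}))) := by
  have : NeZero m := ⟨hm.ne'⟩
  rw [closure_sigmaQ_image]
  have := finite_connectedComponents_roughClosure_twist χ hr
  have : Nonempty (ConnectedComponents (roughClosure (twist χ r) 0)) :=
    ⟨ConnectedComponents.mk ⟨1, one_mem_roughClosure _ _⟩⟩
  exact Nat.card_pos

theorem stmt2_general (r : ℝ) (hr : 1 < r) :
    {n : ℕ | ∃ (m : ℕ) (χ : DirichletCharacter ℂ m), 0 < m ∧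
        Nat.card (ConnectedComponents
          ↥(closure (sigmaQ χ r '' {k : ℕ | 0 < k}))) = n}
      = {n : ℕ | 0 < n} := by
  refine Set.Subset.antisymm ?_ fun n hn ↦ ?_
  · rintro _ ⟨m, χ, hm, rfl⟩
    exact card_connectedComponents_closure_sigmaQ_pos hm χ hr
  · obtain ⟨M, hM, hcard⟩ := exists_card_connectedComponents_roughClosure_twist_one hr (n - 1)
    refine ⟨M, 1, hM, ?_⟩
    rw [closure_sigmaQ_image, hcard, Nat.sub_add_cancel hn]

/-- There is `r₀ > 0` such that for every `r > r₀`, the set of numbers of connected components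
of the closure of the image of `σ_{r,ℚ,χ}`, as `χ` ranges over all Dirichlet characters (of all
moduli), is exactly the set of all positive integers. -/
theorem stmt2 :
    ∃ r₀ : ℝ, 0 < r₀ ∧ ∀ r : ℝ, r₀ < r →
      {n : ℕ | ∃ (m : ℕ) (χ : DirichletCharacter ℂ m), 0 < m ∧
          Nat.card (ConnectedComponents
            ↥(closure (sigmaQ χ r '' {k : ℕ | 0 < k}))) = n}
        = {n : ℕ | 0 < n} :=
  ⟨1, one_pos, stmt2_general⟩
end

section
/- Let r ≥ 3 be a real number and let χ be a Dirichlet character of modulus m. Then the closure of σ_{r,ℚ,χ}(ℕ) in ℂ has at least 2^{π_m(2r−2) − δ_m} connected components, where π_m(x) is the number of primes p ≤ x with p ∤ m, and δ_m = 0 if m is even and δ_m = 1 if m is odd. -/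
/-- `π_m(x)`: the number of primes `p ≤ x` that do not divide `m`. -/
noncomputable def pim (m : ℕ) (x : ℝ) : ℕ :=
  {p : ℕ | p.Prime ∧ (p : ℝ) ≤ x ∧ ¬ p ∣ m}.ncard

open Finset
open scoped Cardinal symmDiff Topology

universe u

theorem intervalIntegrable_rpow_of_pos {a b : ℝ} (s : ℝ) (ha : 0 < a) (hab : a ≤ b) :
    IntervalIntegrable (fun x : ℝ ↦ x ^ s) MeasureTheory.volume a b :=
  intervalIntegral.intervalIntegrable_rpow (.inr (Set.notMem_uIcc_of_lt ha (ha.trans_le hab)))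

theorem tangent_le_rpow_neg {r a x : ℝ} (hr : 0 ≤ r) (ha : 0 < a) (hx : 0 < x) :
    (1 + r) * a ^ (-r) - r * a ^ (-r) / a * x ≤ x ^ (-r) := by
  have hxa : 0 < x / a := div_pos hx ha
  have tangent_at_one : 1 - r * (x / a - 1) ≤ (x / a) ^ (-r) := by
    rw [Real.rpow_def_of_pos hxa]
    have hlog := mul_le_mul_of_nonneg_left (Real.log_le_sub_one_of_pos hxa) hr
    linarith [Real.add_one_le_exp (Real.log (x / a) * -r)]
  calc (1 + r) * a ^ (-r) - r * a ^ (-r) / a * x = a ^ (-r) * (1 - r * (x / a - 1)) := by ring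
    _ ≤ a ^ (-r) * (x / a) ^ (-r) := by gcongr
    _ = x ^ (-r) := by rw [← Real.mul_rpow ha.le hxa.le, mul_div_cancel₀ x ha.ne']

theorem sub_mul_midpoint_rpow_neg_le_integral {r a b : ℝ} (hr : 0 ≤ r) (ha : 0 < a)
    (hab : a ≤ b) : (b - a) * ((a + b) / 2) ^ (-r) ≤ ∫ x in a..b, x ^ (-r) := by
  set c : ℝ := (a + b) / 2 with hc
  have hc0 : 0 < c := by linarith
  calc (b - a) * c ^ (-r)
      = ∫ x in a..b, ((1 + r) * c ^ (-r) - r * c ^ (-r) / c * x) := by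
        rw [intervalIntegral.integral_sub (by simp)
            (Continuous.intervalIntegrable (by fun_prop) _ _),
          intervalIntegral.integral_const, intervalIntegral.integral_const_mul, integral_id,
          smul_eq_mul, show b ^ 2 - a ^ 2 = 2 * c * (b - a) by rw [hc]; ring]
        field_simp
        ring
    _ ≤ ∫ x in a..b, x ^ (-r) :=
        intervalIntegral.integral_mono_on hab (Continuous.intervalIntegrable (by fun_prop) _ _)
          (intervalIntegrable_rpow_of_pos _ ha hab) fun x hx ↦
            tangent_le_rpow_neg hr hc0 (ha.trans_le hx.1)

theorem integral_rpow_neg_le {r a b : ℝ} (hr : 1 < r) (ha : 0 < a) (hab : a ≤ b) :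
    ∫ x in a..b, x ^ (-r) ≤ a ^ (1 - r) / (r - 1) := by
  have hb : 0 ≤ b ^ (1 - r) := Real.rpow_nonneg (ha.le.trans hab) _
  calc ∫ x in a..b, x ^ (-r) = (a ^ (1 - r) - b ^ (1 - r)) / (r - 1) := by
        rw [integral_rpow (.inr ⟨by linarith, Set.notMem_uIcc_of_lt ha (ha.trans_le hab)⟩),
          ← neg_div_neg_eq]
        ring_nf
    _ ≤ a ^ (1 - r) / (r - 1) := by
        gcongr
        linarith

theorem sum_range_rpow_neg_le {r a h : ℝ} (hr : 1 < r) (ha : 0 < a) (hh : 0 < h) (N : ℕ) :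
    ∑ j ∈ range N, (a + h * (j + 1)) ^ (-r) ≤ (a + h / 2) ^ (1 - r) / (h * (r - 1)) := by
  let c : ℕ → ℝ := fun j ↦ a + h / 2 + h * j
  have hc : ∀ j, 0 < c j := fun j ↦ by positivity
  have hmono : Monotone c := fun i j hij ↦ by simp only [c]; gcongr
  have midpoint_bound : ∀ j : ℕ,
      h * (a + h * (j + 1)) ^ (-r) ≤ ∫ x in c j..c (j + 1), x ^ (-r) := by
    intro j
    convert sub_mul_midpoint_rpow_neg_le_integral (zero_le_one.trans hr.le) (hc j)
      (hmono j.le_succ) using 3 <;> simp only [c] <;> push_cast <;> ring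
  rw [← div_div, div_right_comm, le_div_iff₀' hh, mul_sum]
  calc ∑ j ∈ range N, h * (a + h * (j + 1)) ^ (-r)
      ≤ ∑ j ∈ range N, ∫ x in c j..c (j + 1), x ^ (-r) := sum_le_sum fun j _ ↦ midpoint_bound j
    _ = ∫ x in c 0..c N, x ^ (-r) := intervalIntegral.sum_integral_adjacent_intervals fun j _ ↦
        intervalIntegrable_rpow_of_pos _ (hc j) (hmono j.le_succ)
    _ ≤ (c 0) ^ (1 - r) / (r - 1) := integral_rpow_neg_le hr (hc 0) (hmono N.zero_le)
    _ = (a + h / 2) ^ (1 - r) / (r - 1) := by simp [c]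

theorem sum_rpow_neg_le_of_modEq {r : ℝ} {h d : ℕ} {s : Finset ℕ} (hr : 1 < r) (hh : 0 < h)
    (hd : 0 < d) (hs : ∀ k ∈ s, d < k ∧ d ≡ k [MOD h]) :
    ∑ k ∈ s, (k : ℝ) ^ (-r) ≤ ((d : ℝ) + h / 2) ^ (1 - r) / (h * (r - 1)) := by
  let term : ℕ → ℕ := fun j ↦ d + h * (j + 1)
  have hterm : term.Injective := fun i j hij ↦ by simpa [term, hh.ne'] using hij
  have hsub : s ⊆ (range (s.sup id)).image term := fun k hk ↦ by
    obtain ⟨hdk, hmod⟩ := hs k hk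
    obtain ⟨q, hq⟩ := (Nat.modEq_iff_dvd' hdk.le).1 hmod
    obtain ⟨j, rfl⟩ : ∃ j, q = j + 1 := Nat.exists_eq_succ_of_ne_zero (by rintro rfl; omega)
    have hk_eq : term j = k := by simp only [term]; omega
    have hjk : j < k := by rw [← hk_eq]; simp only [term]; nlinarith
    exact mem_image.2 ⟨j, mem_range.2 (hjk.trans_le (le_sup (f := id) hk)), hk_eq⟩
  calc ∑ k ∈ s, (k : ℝ) ^ (-r)
      ≤ ∑ k ∈ (range (s.sup id)).image term, (k : ℝ) ^ (-r) :=
        sum_le_sum_of_subset_of_nonneg hsub fun k _ _ ↦ by positivity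
    _ = ∑ j ∈ range (s.sup id), ((d : ℝ) + h * (j + 1)) ^ (-r) := by
        rw [sum_image hterm.injOn]; simp [term]
    _ ≤ _ := sum_range_rpow_neg_le hr (by exact_mod_cast hd) (by exact_mod_cast hh) _

/-- A lower bound for how much `d ^ (-r)` exceeds the sum of the later terms
`(d + h) ^ (-r) + (d + 2 * h) ^ (-r) + ⋯` of a progression of difference `h`: by the midpoint rule
that tail is at most `1 / h` times the integral of `x ^ (-r)` from `d + h / 2` to infinity. -/
noncomputable def progressionGap (r : ℝ) (h d : ℕ) : ℝ :=
  (d : ℝ) ^ (-r) - ((d : ℝ) + h / 2) ^ (1 - r) / (h * (r - 1))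

theorem progressionGap_pos {r : ℝ} {h d : ℕ} (hr : 2 ≤ r) (hh : 0 < h) (hd : 0 < d)
    (hdh : 3 * (d : ℝ) ≤ 4 * h * (r - 1)) : 0 < progressionGap r h d := by
  have hd' : (0 : ℝ) < d := by exact_mod_cast hd
  have : (0 : ℝ) < h := by exact_mod_cast hh
  have hs : 0 < r - 1 := by linarith
  set u : ℝ := h / (2 * d) with hu
  have hu0 : 0 < u := by positivity
  have bernoulli : 1 + (r - 1) * u ≤ (1 + u) ^ (r - 1) :=
    one_add_mul_self_le_rpow_one_add (by linarith) (by linarith)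
  have hy : 3 / 4 ≤ 2 * u * (r - 1) := by rw [hu]; field_simp; linarith
  have key : 1 < 2 * u * (r - 1) * (1 + u) ^ (r - 1) := by nlinarith
  have hpow : ((d : ℝ) + h / 2) ^ (1 - r) = d ^ (-r) * d / (1 + u) ^ (r - 1) := by
    rw [show (d : ℝ) + h / 2 = d * (1 + u) by rw [hu]; field_simp,
      Real.mul_rpow hd'.le (by linarith), ← neg_sub r 1, Real.rpow_neg (by linarith : 0 ≤ 1 + u),
      neg_sub, sub_eq_neg_add, Real.rpow_add_one hd'.ne', div_eq_mul_inv]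
  rw [progressionGap, sub_pos, hpow, div_div, div_lt_iff₀ (by positivity)]
  gcongr
  calc (d : ℝ) < d * (2 * u * (r - 1) * (1 + u) ^ (r - 1)) := by nlinarith
    _ = (1 + u) ^ (r - 1) * (h * (r - 1)) := by rw [hu]; field_simp

theorem exists_pos_forall_le_progressionGap {r : ℝ} {h : ℕ} (hr : 2 ≤ r) (hh : 0 < h) :
    ∃ ε > 0, ∀ d : ℕ, 0 < d → 3 * (d : ℝ) ≤ 4 * h * (r - 1) → ε ≤ progressionGap r h d := by
  let D : Set ℕ := {d | 0 < d ∧ 3 * (d : ℝ) ≤ 4 * h * (r - 1)}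
  have hD : D.Finite := (Set.finite_Iic ⌊4 * h * (r - 1)⌋₊).subset fun d hd ↦
    Nat.le_floor (by linarith [hd.2, d.cast_nonneg (α := ℝ)])
  have hgap : ∀ᶠ ε in 𝓝[>] (0 : ℝ), ∀ d ∈ D, ε ≤ progressionGap r h d :=
    (Filter.eventually_all_finite hD).2 fun d hd ↦
      nhdsWithin_le_nhds (eventually_le_nhds (progressionGap_pos hr hh hd.1 hd.2))
  obtain ⟨ε, hε, hε0⟩ := (hgap.and self_mem_nhdsWithin).exists
  exact ⟨ε, hε0, fun d hd hdh ↦ hε d ⟨hd, hdh⟩⟩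

theorem norm_sub_sum_erase_le_norm_sum_sub_sum {ι E : Type*} [DecidableEq ι]
    [SeminormedAddCommGroup E] (f : ι → E) {s t : Finset ι} {d : ι} (hd : d ∈ s ∆ t) :
    ‖f d‖ - ∑ k ∈ (s ∆ t).erase d, ‖f k‖ ≤ ‖∑ k ∈ s, f k - ∑ k ∈ t, f k‖ := by
  let g : ι → E := fun k ↦ if k ∈ s then f k else -f k
  have norm_g : ∀ k, ‖g k‖ = ‖f k‖ := fun k ↦ by simp only [g]; split_ifs <;> simp
  have sum_g : ∑ k ∈ s, f k - ∑ k ∈ t, f k = ∑ k ∈ s ∆ t, g k := by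
    rw [← sum_sdiff_sub_sum_sdiff, symmDiff_def, sup_eq_union,
      sum_union disjoint_sdiff_sdiff, sub_eq_add_neg, ← sum_neg_distrib]
    congr 1 <;> refine sum_congr rfl fun k hk ↦ ?_ <;> simp [g, (mem_sdiff.1 hk)]
  rw [sum_g, ← add_sum_erase _ _ hd, ← norm_g d]
  simp only [← norm_g]
  calc ‖g d‖ - ∑ k ∈ (s ∆ t).erase d, ‖g k‖ ≤ ‖g d‖ - ‖∑ k ∈ (s ∆ t).erase d, g k‖ := by
        gcongr
        exact norm_sum_le _ _
    _ ≤ _ := norm_sub_le_norm_add _ _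

theorem mk_range_le_mk_connectedComponents_closure_range {X L : Type u} {A : Type*}
    [PseudoMetricSpace X] (f : A → X) (label : A → L) {ε : ℝ} (hε : 0 < ε)
    (hf : ∀ a b, dist (f a) (f b) < ε → label a = label b) :
    #(Set.range label) ≤ #(ConnectedComponents (closure (Set.range f))) := by
  let _ : UniformSpace L := ⊥
  let _ : PseudoMetricSpace A := .induced f inferInstance
  let e : A → closure (Set.range f) := fun a ↦ ⟨f a, subset_closure ⟨a, rfl⟩⟩
  have he : IsUniformInducing e :=
    isUniformInducing_iff_uniformSpace.2 UniformSpace.comap_comap.symm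
  have he_dense : DenseRange e := by
    rw [DenseRange, Subtype.dense_iff, ← Set.range_comp]
    rfl
  have hlabel : UniformContinuous label := by
    rw [UniformContinuous, DiscreteUniformity.eq_principal_setRelId (X := L),
      Filter.tendsto_principal]
    filter_upwards [Metric.dist_mem_uniformity hε] with p hp using hf p.1 p.2 hp
  have hext := (uniformContinuous_uniformly_extend he he_dense hlabel).continuous
  refine (Cardinal.mk_le_mk_of_subset ?_).trans
    (Cardinal.mk_range_le (f := hext.connectedComponentsLift))
  rintro _ ⟨a, rfl⟩
  exact ⟨e a, uniformly_extend_of_ind he he_dense hlabel a⟩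

/-- The divisors of `n` coprime to `m`: the support of the divisor sum `σ_{r,ℚ,χ}(n)` for `χ` of
modulus `m`. -/
def coprimeDivisors (m n : ℕ) : Finset ℕ := {d ∈ n.divisors | d.Coprime m}

theorem mem_coprimeDivisors {m n d : ℕ} :
    d ∈ coprimeDivisors m n ↔ (d ∣ n ∧ n ≠ 0) ∧ d.Coprime m := by
  rw [coprimeDivisors, mem_filter, Nat.mem_divisors]

theorem one_mem_coprimeDivisors {m n : ℕ} (hn : n ≠ 0) : 1 ∈ coprimeDivisors m n := by
  simp [mem_coprimeDivisors, hn]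

theorem pos_of_mem_coprimeDivisors {m n d : ℕ} (hd : d ∈ coprimeDivisors m n) : 0 < d :=
  Nat.pos_of_mem_divisors (mem_filter.1 hd).1

theorem mem_coprimeDivisors_of_dvd {m n d e : ℕ} (hd : d ∈ coprimeDivisors m n) (hed : e ∣ d) :
    e ∈ coprimeDivisors m n := by
  rw [mem_coprimeDivisors] at hd ⊢
  exact ⟨⟨hed.trans hd.1.1, hd.1.2⟩, hd.2.coprime_dvd_left hed⟩

theorem odd_of_mem_coprimeDivisors {m n d : ℕ} (hn : 2 ∉ coprimeDivisors m n)
    (hd : d ∈ coprimeDivisors m n) : Odd d := by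
  by_contra h
  exact hn (mem_coprimeDivisors_of_dvd hd (Nat.not_odd_iff_even.1 h).two_dvd)

section Sigma

variable {m : ℕ} (χ : DirichletCharacter ℂ m) {r : ℝ}

theorem sigmaQ_eq_sum_coprimeDivisors (r : ℝ) (n : ℕ) :
    sigmaQ χ r n = ∑ d ∈ coprimeDivisors m n, χ d * (((d : ℝ) ^ (-r) : ℝ) : ℂ) := by
  refine (sum_filter_of_ne fun d _ hd ↦ ?_).symm
  contrapose! hd
  rw [χ.map_nonunit (by rwa [ZMod.isUnit_iff_coprime]), zero_mul]

theorem norm_mul_rpow_neg_of_coprime {d : ℕ} (r : ℝ) (hd : d.Coprime m) :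
    ‖χ d * (((d : ℝ) ^ (-r) : ℝ) : ℂ)‖ = (d : ℝ) ^ (-r) := by
  rw [norm_mul, ← ZMod.coe_unitOfCoprime d hd, χ.unit_norm_eq_one, one_mul, Complex.norm_real,
    Real.norm_of_nonneg (by positivity)]

theorem progressionGap_le_norm_sigmaQ_sub {h n n' d : ℕ} (hr : 1 < r) (hh : 0 < h)
    (hd : d ∈ coprimeDivisors m n ∆ coprimeDivisors m n')
    (hmin : ∀ k ∈ coprimeDivisors m n ∆ coprimeDivisors m n', d ≤ k ∧ d ≡ k [MOD h]) :
    progressionGap r h d ≤ ‖sigmaQ χ r n - sigmaQ χ r n'‖ := by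
  set Δ := coprimeDivisors m n ∆ coprimeDivisors m n'
  have mem_or : ∀ k ∈ Δ, k ∈ coprimeDivisors m n ∨ k ∈ coprimeDivisors m n' := fun k hk ↦
    (mem_symmDiff.1 hk).imp And.left And.left
  have norm_term : ∀ k ∈ Δ, ‖χ k * (((k : ℝ) ^ (-r) : ℝ) : ℂ)‖ = (k : ℝ) ^ (-r) := fun k hk ↦
    norm_mul_rpow_neg_of_coprime χ r
      ((mem_or k hk).elim (fun h ↦ (mem_filter.1 h).2) fun h ↦ (mem_filter.1 h).2)
  have hd0 : 0 < d := (mem_or d hd).elim pos_of_mem_coprimeDivisors pos_of_mem_coprimeDivisors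
  have tail_le := sum_rpow_neg_le_of_modEq (s := Δ.erase d) hr hh hd0 fun k hk ↦
    have hk := mem_erase.1 hk
    ⟨(hmin k hk.2).1.lt_of_ne' hk.1, (hmin k hk.2).2⟩
  rw [sigmaQ_eq_sum_coprimeDivisors, sigmaQ_eq_sum_coprimeDivisors]
  calc progressionGap r h d ≤ (d : ℝ) ^ (-r) - ∑ k ∈ Δ.erase d, (k : ℝ) ^ (-r) :=
        sub_le_sub_left tail_le _
    _ = ‖χ d * (((d : ℝ) ^ (-r) : ℝ) : ℂ)‖ -
          ∑ k ∈ Δ.erase d, ‖χ k * (((k : ℝ) ^ (-r) : ℝ) : ℂ)‖ := by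
        rw [norm_term d hd, sum_congr rfl fun k hk ↦ norm_term k (mem_of_mem_erase hk)]
    _ ≤ _ := norm_sub_sum_erase_le_norm_sum_sub_sum
        (fun k : ℕ ↦ χ k * (((k : ℝ) ^ (-r) : ℝ) : ℂ)) hd

theorem progressionGap_one_two_le_norm_sigmaQ_sub {n n' : ℕ} (hr : 1 < r) (hn : n ≠ 0)
    (hn' : n' ≠ 0) (h2 : 2 ∈ coprimeDivisors m n ∆ coprimeDivisors m n') :
    progressionGap r 1 2 ≤ ‖sigmaQ χ r n - sigmaQ χ r n'‖ := by
  refine progressionGap_le_norm_sigmaQ_sub χ hr one_pos h2 fun k hk ↦ ⟨?_, Nat.modEq_one⟩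
  have hk0 : 0 < k := (mem_symmDiff.1 hk).elim (fun h ↦ pos_of_mem_coprimeDivisors h.1)
    fun h ↦ pos_of_mem_coprimeDivisors h.1
  have hk1 : k ≠ 1 := by
    rintro rfl
    simp [mem_symmDiff, one_mem_coprimeDivisors, hn, hn'] at hk
  omega

theorem exists_progressionGap_two_le_norm_sigmaQ_sub {n n' p : ℕ} (hr : 1 < r)
    (hn : 2 ∉ coprimeDivisors m n) (hn' : 2 ∉ coprimeDivisors m n')
    (hp : p ∈ coprimeDivisors m n ∆ coprimeDivisors m n') :
    ∃ d, 0 < d ∧ d ≤ p ∧ progressionGap r 2 d ≤ ‖sigmaQ χ r n - sigmaQ χ r n'‖ := by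
  set Δ := coprimeDivisors m n ∆ coprimeDivisors m n'
  have odd_of_mem : ∀ k ∈ Δ, Odd k := fun k hk ↦ (mem_symmDiff.1 hk).elim
    (fun h ↦ odd_of_mem_coprimeDivisors hn h.1) fun h ↦ odd_of_mem_coprimeDivisors hn' h.1
  obtain ⟨d, hd, hmin⟩ := exists_min_image Δ id ⟨p, hp⟩
  refine ⟨d, (odd_of_mem d hd).pos, hmin p hp, ?_⟩
  refine progressionGap_le_norm_sigmaQ_sub χ hr two_pos hd fun k hk ↦ ⟨hmin k hk, ?_⟩
  exact (Nat.odd_iff.1 (odd_of_mem d hd)).trans (Nat.odd_iff.1 (odd_of_mem k hk)).symm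

/-- The elements of `P` among the divisors of `n` coprime to `m`, replaced by `∅` when `2` is such
a divisor. For a set `P` of odd primes, this is the invariant that separates connected
components. -/
def oddPrimeLabel (m : ℕ) (P : Finset ℕ) (n : ℕ) : Finset ℕ :=
  if 2 ∈ coprimeDivisors m n then ∅ else P ∩ coprimeDivisors m n

theorem exists_pos_oddPrimeLabel_eq_of_norm_lt {P : Finset ℕ} (hr : 5 / 2 ≤ r)
    (hP : ∀ p ∈ P, 3 * (p : ℝ) ≤ 8 * (r - 1)) :
    ∃ ε > 0, ∀ n n' : ℕ, n ≠ 0 → n' ≠ 0 → ‖sigmaQ χ r n - sigmaQ χ r n'‖ < ε →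
      oddPrimeLabel m P n = oddPrimeLabel m P n' := by
  have hr1 : 1 < r := by linarith
  have hr2 : 2 ≤ r := by linarith
  obtain ⟨ε₁, hε₁, gap_one⟩ := exists_pos_forall_le_progressionGap hr2 one_pos
  obtain ⟨ε₂, hε₂, gap_two⟩ := exists_pos_forall_le_progressionGap hr2 two_pos
  refine ⟨min ε₁ ε₂, lt_min hε₁ hε₂, fun n n' hn hn' hclose ↦ ?_⟩
  have same_parity : 2 ∈ coprimeDivisors m n ↔ 2 ∈ coprimeDivisors m n' := by
    by_contra hne
    have h2 : 2 ∈ coprimeDivisors m n ∆ coprimeDivisors m n' := mem_symmDiff.2 (by tauto)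
    have := gap_one 2 two_pos (by push_cast; linarith)
    have := progressionGap_one_two_le_norm_sigmaQ_sub χ hr1 hn hn' h2
    exact (hclose.trans_le (min_le_left _ _)).not_ge (by linarith)
  by_cases h2 : 2 ∈ coprimeDivisors m n
  · rw [oddPrimeLabel, oddPrimeLabel, if_pos h2, if_pos (same_parity.1 h2)]
  have h2' := mt same_parity.2 h2
  rw [oddPrimeLabel, oddPrimeLabel, if_neg h2, if_neg h2']
  by_contra hne
  obtain ⟨p, hpP, hp⟩ : ∃ p ∈ P, p ∈ coprimeDivisors m n ∆ coprimeDivisors m n' := by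
    by_contra! h
    exact hne (by simp only [mem_symmDiff] at h; ext p; have := h p; grind)
  obtain ⟨d, hd0, hdp, hgap⟩ := exists_progressionGap_two_le_norm_sigmaQ_sub χ hr1 h2 h2' hp
  have hdp' : (d : ℝ) ≤ p := by exact_mod_cast hdp
  have := gap_two d hd0 (by push_cast; linarith [hP p hpP])
  exact (hclose.trans_le (min_le_right _ _)).not_ge (by linarith)

theorem oddPrimeLabel_prod_id {P S : Finset ℕ} (hSP : S ⊆ P)
    (hP : ∀ p ∈ P, p.Prime ∧ p ≠ 2 ∧ ¬ p ∣ m) : oddPrimeLabel m P (∏ p ∈ S, p) = S := by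
  have prod_ne_zero : ∏ p ∈ S, p ≠ 0 := prod_ne_zero_iff.2 fun p hp ↦ (hP p (hSP hp)).1.ne_zero
  have prime_dvd_prod : ∀ q : ℕ, q.Prime → (q ∣ ∏ p ∈ S, p ↔ q ∈ S) := fun q hq ↦ by
    refine ⟨fun h ↦ ?_, dvd_prod_of_mem _⟩
    obtain ⟨p, hp, hqp⟩ := (hq.prime.dvd_finsetProd_iff _).1 h
    rwa [(Nat.prime_dvd_prime_iff_eq hq (hP p (hSP hp)).1).1 hqp]
  have two_notMem : 2 ∉ coprimeDivisors m (∏ p ∈ S, p) := fun h ↦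
    (hP 2 (hSP ((prime_dvd_prod 2 Nat.prime_two).1 (mem_coprimeDivisors.1 h).1.1))).2.1 rfl
  rw [oddPrimeLabel, if_neg two_notMem]
  ext q
  rw [mem_inter, mem_coprimeDivisors]
  refine ⟨fun h ↦ (prime_dvd_prod q (hP q h.1).1).1 h.2.1.1, fun hq ↦ ?_⟩
  obtain ⟨hq_prime, -, hqm⟩ := hP q (hSP hq)
  exact ⟨hSP hq, ⟨dvd_prod_of_mem _ hq, prod_ne_zero⟩, hq_prime.coprime_iff_not_dvd.2 hqm⟩

theorem two_pow_card_le_mk_connectedComponents {P : Finset ℕ} (hr : 5 / 2 ≤ r)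
    (hP : ∀ p ∈ P, (p.Prime ∧ p ≠ 2 ∧ ¬ p ∣ m) ∧ 3 * (p : ℝ) ≤ 8 * (r - 1)) :
    ((2 ^ P.card : ℕ) : Cardinal) ≤
      #(ConnectedComponents (closure (sigmaQ χ r '' {k : ℕ | 0 < k}))) := by
  obtain ⟨ε, hε, hlabel⟩ := exists_pos_oddPrimeLabel_eq_of_norm_lt χ hr fun p hp ↦ (hP p hp).2
  let label : {k : ℕ | 0 < k} → Finset ℕ := fun n ↦ oddPrimeLabel m P n
  have powerset_subset : (P.powerset : Set (Finset ℕ)) ⊆ Set.range label := fun S hS ↦ by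
    have hSP : S ⊆ P := mem_powerset.1 hS
    exact ⟨⟨∏ p ∈ S, p, prod_pos fun p hp ↦ (hP p (hSP hp)).1.1.pos⟩,
      oddPrimeLabel_prod_id hSP fun p hp ↦ (hP p hp).1⟩
  calc ((2 ^ P.card : ℕ) : Cardinal) = #(P.powerset : Set (Finset ℕ)) := by
        rw [← card_powerset]; exact (Cardinal.mk_coe_finset).symm
    _ ≤ #(Set.range label) := Cardinal.mk_le_mk_of_subset powerset_subset
    _ ≤ _ := by
        rw [Set.image_eq_range]
        exact mk_range_le_mk_connectedComponents_closure_range _ label hε fun n n' h ↦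
          hlabel n n' n.2.ne' n'.2.ne' (by rwa [← dist_eq_norm])

end Sigma

/-- The odd primes `p ≤ x` that do not divide `m`. -/
noncomputable def oddPrimesNotDvd (m : ℕ) (x : ℝ) : Finset ℕ :=
  {p ∈ Iic ⌊x⌋₊ | p.Prime ∧ p ≠ 2 ∧ ¬ p ∣ m}

theorem mem_oddPrimesNotDvd {m p : ℕ} {x : ℝ} :
    p ∈ oddPrimesNotDvd m x ↔ (p.Prime ∧ p ≠ 2 ∧ ¬ p ∣ m) ∧ (p : ℝ) ≤ x := by
  rw [oddPrimesNotDvd, mem_filter, mem_Iic, and_comm]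
  exact and_congr_right fun hp ↦ Nat.le_floor_iff' hp.1.ne_zero

theorem pim_le_card_oddPrimesNotDvd_add (m : ℕ) (x : ℝ) :
    pim m x ≤ (oddPrimesNotDvd m x).card + if 2 ∣ m then 0 else 1 := by
  have hsub : {p : ℕ | p.Prime ∧ (p : ℝ) ≤ x ∧ ¬ p ∣ m} ⊆
      ((oddPrimesNotDvd m x ∪ if 2 ∣ m then ∅ else {2} : Finset ℕ) : Set ℕ) := by
    rintro p ⟨hp, hpx, hpm⟩
    rw [mem_coe, mem_union, mem_oddPrimesNotDvd]
    rcases eq_or_ne p 2 with rfl | hp2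
    · simp [hpm]
    · exact .inl ⟨⟨hp, hp2, hpm⟩, hpx⟩
  calc pim m x ≤ (oddPrimesNotDvd m x ∪ if 2 ∣ m then ∅ else {2}).card := by
        rw [← Set.ncard_coe_finset]
        exact Set.ncard_le_ncard hsub
    _ ≤ (oddPrimesNotDvd m x).card + (if 2 ∣ m then ∅ else {2} : Finset ℕ).card :=
        card_union_le _ _
    _ = _ := by split_ifs <;> simp

theorem stmt3_general (r : ℝ) (m : ℕ) (χ : DirichletCharacter ℂ m) :
    ((2 ^ (pim m (2 * r - 2) - (if 2 ∣ m then 0 else 1)) : ℕ) : Cardinal) ≤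
      Cardinal.mk (ConnectedComponents
        ↥(closure (sigmaQ χ r '' {k : ℕ | 0 < k}))) := by
  set P := oddPrimesNotDvd m (2 * r - 2)
  calc ((2 ^ (pim m (2 * r - 2) - (if 2 ∣ m then 0 else 1)) : ℕ) : Cardinal)
      ≤ ((2 ^ P.card : ℕ) : Cardinal) := by
        gcongr
        · norm_num
        · exact Nat.sub_le_iff_le_add.2 (pim_le_card_oddPrimesNotDvd_add m _)
    _ ≤ _ := by
        rcases P.eq_empty_or_nonempty with hP | ⟨p, hp⟩
        · have : Nonempty (closure (sigmaQ χ r '' {k : ℕ | 0 < k})) :=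
            ⟨⟨_, subset_closure ⟨1, Nat.one_pos, rfl⟩⟩⟩
          simp [hP, Cardinal.one_le_iff_ne_zero]
        · obtain ⟨⟨hp_prime, hp2, -⟩, hpr⟩ := mem_oddPrimesNotDvd.1 hp
          have three_le : (3 : ℝ) ≤ p := by exact_mod_cast hp_prime.two_le.lt_of_ne' hp2
          refine two_pow_card_le_mk_connectedComponents χ (by linarith) fun q hq ↦
            ⟨(mem_oddPrimesNotDvd.1 hq).1, ?_⟩
          linarith [(mem_oddPrimesNotDvd.1 hq).2]

/-- For `r ≥ 3` and a Dirichlet character `χ` of modulus `m`, the closure of the image of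
`σ_{r,ℚ,χ}` has at least `2 ^ (π_m(2r−2) − δ_m)` connected components, where `δ_m = 0` if `m`
is even and `δ_m = 1` if `m` is odd. -/
theorem stmt3 (r : ℝ) (hr : 3 ≤ r) (m : ℕ) (hm : 0 < m) (χ : DirichletCharacter ℂ m) :
    ((2 ^ (pim m (2 * r - 2) - (if 2 ∣ m then 0 else 1)) : ℕ) : Cardinal) ≤
      Cardinal.mk (ConnectedComponents
        ↥(closure (sigmaQ χ r '' {k : ℕ | 0 < k}))) := by
  exact stmt3_general r m χ
end
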